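/- For every integer n ≥ 1, there is a group isomorphism from the presented group G_n with generators s_1, …, s_{n−1}, r_1, …, r_{n−1} and relations: s_i s_j = s_j s_i for |i−j| > 1; s_i s_{i+1} s_i = s_{i+1} s_i s_{i+1} for 1 ≤ i ≤ n−2; r_i r_j = r_j r_i for |i−j| > 1; r_i r_{i+1} r_i = r_{i+1} r_i r_{i+1} for 1 ≤ i ≤ n−2; r_i² = 1 for 1 ≤ i ≤ n−1; r_i s_j = s_j r_i for |i−j| > 1; r_{i+1} r_i s_{i+1} = s_i r_{i+1} r_i for 1 ≤ i ≤ n−2; s_{i+1} s_i r_{i+1} = r_i s_{i+1} s_i for 1 ≤ i ≤ n−2, onto the subgroup PC_n of Aut(F_n) consisting of all automorphisms α such that α(x_i) = w_i⁻¹ x_{π(i)} w_i for all i, for some permutation π and words w_i ∈ F_n; this isomorphism sends s_i to σ_i and r_i to ρ_i. -/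

import Mathlib

/-!
The homomorphism exists because `σ_i`, `ρ_i` satisfy the welded braid relations. That it is onto
`PC_n` and injective is proved by peak reduction.

*Conjugating words.* An automorphism `α` in `PC_n` maps `x_k` to `v_k x_{π k} v_k⁻¹`, which is
reduced if `v_k` is chosen reduced and not ending in `x_{π k} ^ (±1)` (`CanForm`). Its level `lev α`
is the total length of the images of the generators. Conjugating the image of `x_i` by the image of
`x_j` or its inverse (an elementary move, right multiplication by `ch i j e`) lowers the level if
`v_j x_{π j} ^ (±1)` is a prefix of `v_i`, and raises it otherwise (`CanForm.norm_conj_lt`,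
`CanForm.prefix_or_lt`). If no such cancelling prefix occurs, a ping-pong argument and surjectivity
of `α` force all `v_k` to be trivial (`canForm_trivial`). So moves reduce every `α` in `PC_n` to a
permutation of the generators, which gives surjectivity (`PC_subset_range`).

*Relations in the presented group.* The `r_i` generate a copy of the symmetric group
(`eq_one_of_p`), whose point stabilisers are generated by the `r_i` that they contain, for the chain
of stabilisers of initial segments. Hence the conjugates `chi a b` of `s_0 r_0` are well defined
elements of the presented group (`chi_eq`), permuted by the `r_i`, and the welded relations turn
into McCool's relations for the basis-conjugating automorphisms (`chi_comm`, `chi_triple`,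
`chi_disjoint`). Every element is a product `q r` with `q` generated by the `chi a b` and `r` by
the `r_i` (`exists_decomp`).

*Injectivity.* Join two elements of the presented group by an edge when they differ by an elementary
move. Two edges that both lower the level from `g` come from two cancelling prefixes, and McCool's
relations join their lower ends by a path below `g`: a square for independent moves, a pentagon for
nested prefixes (`Acts.peak`). By a form of Newman's lemma (`eq_of_connected`) a connected component
has only one local minimum of the level. If `q r` is in the kernel, then `q` and `1` act as
permutations of the generators, so both are minima, and they lie in one component; therefore
`q = 1`, and `r = 1` because the symmetric group acts faithfully.
-/


namespace LoopBraidGroups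

/-- The `i`-th generator `x_i` of the free group of rank `n`
(with junk value `1` when `i ≥ n`); indices are `0`-based. -/
def xg (n i : ℕ) : FreeGroup (Fin n) :=
  if h : i < n then FreeGroup.of (⟨i, h⟩ : Fin n) else 1

/-- `IsSigma n i s` : `s` is the automorphism `σ_i` of the free group of rank `n`. -/
def IsSigma (n i : ℕ) (s : MulAut (FreeGroup (Fin n))) : Prop :=
  s (xg n i) = xg n (i + 1) ∧
    s (xg n (i + 1)) = (xg n (i + 1))⁻¹ * xg n i * xg n (i + 1) ∧
    ∀ j, j < n → j ≠ i → j ≠ i + 1 → s (xg n j) = xg n j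

/-- `IsRho n i r` : `r` is the automorphism `ρ_i`. -/
def IsRho (n i : ℕ) (r : MulAut (FreeGroup (Fin n))) : Prop :=
  r (xg n i) = xg n (i + 1) ∧ r (xg n (i + 1)) = xg n i ∧
    ∀ j, j < n → j ≠ i → j ≠ i + 1 → r (xg n j) = xg n j

/-- The set `PC_n` of permutation-conjugacy automorphisms. -/
def PCSet (n : ℕ) : Set (MulAut (FreeGroup (Fin n))) :=
  {α | ∃ (π : Equiv.Perm (Fin n)) (w : Fin n → FreeGroup (Fin n)),
      ∀ i : Fin n, α (FreeGroup.of i) = (w i)⁻¹ * FreeGroup.of (π i) * w i}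

/-- The abstract generator `s_i` of the welded braid group presentation. -/
def wS (n : ℕ) (i : Fin (n - 1)) : FreeGroup (Fin (n - 1) ⊕ Fin (n - 1)) :=
  FreeGroup.of (Sum.inl i)

/-- The abstract generator `r_i` of the welded braid group presentation. -/
def wR (n : ℕ) (i : Fin (n - 1)) : FreeGroup (Fin (n - 1) ⊕ Fin (n - 1)) :=
  FreeGroup.of (Sum.inr i)

/-- The relators of the welded braid group presentation (relators are written as
`LHS * RHS⁻¹`; indices are `0`-based, so `s_i`, `r_i` for `0 ≤ i ≤ n - 2`). -/
def weldedRels (n : ℕ) : Set (FreeGroup (Fin (n - 1) ⊕ Fin (n - 1))) :=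
  {z | (∃ i j : Fin (n - 1), ((i : ℕ) + 1 < (j : ℕ) ∨ (j : ℕ) + 1 < (i : ℕ)) ∧
          z = wS n i * wS n j * (wS n j * wS n i)⁻¹) ∨
       (∃ i j : Fin (n - 1), (j : ℕ) = (i : ℕ) + 1 ∧
          z = wS n i * wS n j * wS n i * (wS n j * wS n i * wS n j)⁻¹) ∨
       (∃ i j : Fin (n - 1), ((i : ℕ) + 1 < (j : ℕ) ∨ (j : ℕ) + 1 < (i : ℕ)) ∧
          z = wR n i * wR n j * (wR n j * wR n i)⁻¹) ∨
       (∃ i j : Fin (n - 1), (j : ℕ) = (i : ℕ) + 1 ∧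
          z = wR n i * wR n j * wR n i * (wR n j * wR n i * wR n j)⁻¹) ∨
       (∃ i : Fin (n - 1), z = wR n i * wR n i) ∨
       (∃ i j : Fin (n - 1), ((i : ℕ) + 1 < (j : ℕ) ∨ (j : ℕ) + 1 < (i : ℕ)) ∧
          z = wR n i * wS n j * (wS n j * wR n i)⁻¹) ∨
       (∃ i j : Fin (n - 1), (j : ℕ) = (i : ℕ) + 1 ∧
          z = wR n j * wR n i * wS n j * (wS n i * wR n j * wR n i)⁻¹) ∨
       (∃ i j : Fin (n - 1), (j : ℕ) = (i : ℕ) + 1 ∧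
          z = wS n j * wS n i * wR n j * (wR n i * wS n j * wS n i)⁻¹)}

/-! ### Conjugates of generators as reduced words -/

section

open FreeGroup

variable {α : Type*}

/-- `sgn u e` is `u` if `e = true` and `u⁻¹` if `e = false`. -/
def sgn {G : Type*} [Group G] (u : G) (e : Bool) : G := if e then u else u⁻¹

theorem sgn_not {G : Type*} [Group G] (u : G) (e : Bool) : sgn u (!e) = (sgn u e)⁻¹ := by
  cases e <;> simp [sgn]

theorem sgn_conj {G : Type*} [Group G] (g u : G) (e : Bool) :
    sgn (g * u * g⁻¹) e = g * sgn u e * g⁻¹ := by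
  cases e <;> simp [sgn, mul_assoc]

theorem map_sgn {G H : Type*} [Group G] [Group H] (f : G →* H) (u : G) (e : Bool) :
    f (sgn u e) = sgn (f u) e := by
  cases e <;> simp [sgn]

theorem commute_sgn {G : Type*} [Group G] {u v : G} (h : Commute u v) (d e : Bool) :
    Commute (sgn u d) (sgn v e) := by
  cases d <;> cases e <;> simp [sgn, h]

theorem mk_single (a : α) (e : Bool) : mk [(a, e)] = sgn (of a) e := by
  cases e <;> simp [sgn, of, FreeGroup.inv_mk, invRev]

theorem mk_append_cons (v t : List (α × Bool)) (a : α) (e : Bool) :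
    mk (v ++ (a, e) :: t) = mk v * sgn (of a) e * mk t := by
  rw [← mk_single, FreeGroup.mul_mk, FreeGroup.mul_mk, List.append_assoc, List.singleton_append]

/-- `CanForm u a v`: the word `v` is reduced, does not end in `a ^ (±1)`, and
`u = v a v⁻¹`; then `v a v⁻¹` is the reduced word of `u`. -/
def CanForm (u : FreeGroup α) (a : α) (v : List (α × Bool)) : Prop :=
  IsReduced v ∧ (∀ x ∈ v.getLast?, x.1 ≠ a) ∧ u = mk v * of a * (mk v)⁻¹

theorem isReduced_append_cons {v t : List (α × Bool)} {a : α} {e : Bool} (hv : IsReduced v)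
    (ha : ∀ x ∈ v.getLast?, x.1 ≠ a) (ht : IsReduced ((a, e) :: t)) :
    IsReduced (v ++ (a, e) :: t) := by
  refine List.isChain_append.2 ⟨hv, ht, ?_⟩
  intro x hx y hy h
  simp only [List.head?_cons, Option.mem_def, Option.some.injEq] at hy
  subst hy
  exact absurd h (ha x hx)

/-- Two prefixes of a word with distinct last letters are strictly nested. -/
theorem prefix_nested {v v₁ v₂ : List (α × Bool)} {x₁ x₂ : α × Bool} (h : x₁ ≠ x₂)
    (h₁ : v₁ ++ [x₁] <+: v) (h₂ : v₂ ++ [x₂] <+: v) :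
    v₁ ++ [x₁] <+: v₂ ∨ v₂ ++ [x₂] <+: v₁ := by
  rcases List.prefix_or_prefix_of_prefix h₁ h₂ with H | H
  · rcases List.prefix_concat_iff.1 H with H | H
    · have := List.append_inj' H rfl
      simp at this
      exact absurd this.2 h
    · exact Or.inl H
  · rcases List.prefix_concat_iff.1 H with H | H
    · have := List.append_inj' H rfl
      simp at this
      exact absurd this.2.symm h
    · exact Or.inr H

/-- If `v' a' ^ (±1)` is a prefix of the conjugating word of `u`, then conjugating `u` by the
corresponding power of `v' a' v'⁻¹` deletes the letter `a' ^ (±1)` after that prefix. -/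
theorem conj_eq {u u' : FreeGroup α} {a a' : α} {v v' t : List (α × Bool)} {e : Bool}
    (h : u = mk v * of a * (mk v)⁻¹) (h' : u' = mk v' * of a' * (mk v')⁻¹)
    (hp : v = v' ++ (a', e) :: t) :
    (sgn u' e)⁻¹ * u * sgn u' e = mk (v' ++ t) * of a * (mk (v' ++ t))⁻¹ := by
  subst h h' hp
  rw [mk_append_cons, sgn_conj, ← FreeGroup.mul_mk]
  group

variable [DecidableEq α]

theorem isReduced_invRev {v : List (α × Bool)} (hv : IsReduced v) : IsReduced (invRev v) := by
  rw [isReduced_iff_reduce_eq] at *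
  rw [reduce_invRev, hv]

theorem norm_conj_le (v : List (α × Bool)) (a : α) :
    norm (mk v * of a * (mk v)⁻¹) ≤ 2 * v.length + 1 := by
  have h1 := norm_mul_le (mk v * of a) (mk v)⁻¹
  have h2 := norm_mul_le (mk v) (of a)
  have h3 : norm (mk v) ≤ v.length := norm_mk_le
  rw [norm_inv_eq] at h1
  rw [norm_of] at h2
  omega

theorem CanForm.norm_eq {u : FreeGroup α} {a : α} {v : List (α × Bool)} (h : CanForm u a v) :
    norm u = 2 * v.length + 1 := by
  obtain ⟨hv, ha, rfl⟩ := h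
  have h1 : IsReduced ((a, true) :: invRev v) := by
    have := isReduced_invRev (isReduced_append_cons (e := false) hv ha IsReduced.singleton)
    simpa [invRev] using this
  have h2 := isReduced_append_cons hv ha h1
  have h3 : mk v * of a * (mk v)⁻¹ = mk (v ++ (a, true) :: invRev v) := by
    simp [of, FreeGroup.inv_mk]
  rw [h3, FreeGroup.norm, toWord_mk, h2.reduce_eq]
  simp
  omega

/-- Stripping trailing letters `a ^ (±1)` from the conjugating word yields a canonical form;
prefixes that end in another letter survive. -/
theorem exists_canForm (z : FreeGroup α) (a : α) :
    ∃ v, CanForm (z * of a * z⁻¹) a v ∧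
      ∀ p x, x.1 ≠ a → p ++ [x] <+: z.toWord → p ++ [x] <+: v := by
  suffices H : ∀ l : List (α × Bool), IsReduced l →
      ∃ v, CanForm (mk l * of a * (mk l)⁻¹) a v ∧
        ∀ p x, x.1 ≠ a → p ++ [x] <+: l → p ++ [x] <+: v by
    simpa [mk_toWord] using H z.toWord isReduced_toWord
  intro l
  induction l using List.reverseRecOn with
  | nil => exact fun h => ⟨[], ⟨h, by simp, rfl⟩, fun p x _ h => h⟩
  | append_singleton l y ih =>
    intro hl
    by_cases hy : y.1 = a
    · obtain ⟨v, hv, hp⟩ := ih (hl.infix (List.prefix_append l [y]).isInfix)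
      refine ⟨v, ?_, ?_⟩
      · convert hv using 1
        obtain ⟨b, e⟩ := y
        subst hy
        rw [← FreeGroup.mul_mk, mk_single]
        cases e <;> simp [sgn, mul_assoc]
      · intro p x hx h
        apply hp p x hx
        rcases List.prefix_concat_iff.1 h with h | h
        · have := List.append_inj' h rfl
          simp only [List.cons.injEq, and_true] at this
          exact absurd (this.2 ▸ hy) hx
        · exact h
    · exact ⟨l ++ [y], ⟨hl, by simpa using hy, rfl⟩, fun p x _ h => h⟩

/-- The ping-pong step: multiplying by `u ^ (±1)` creates the prefix `v a ^ (±1)`, unless the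
opposite prefix is already present. -/
theorem CanForm.pingpong {u : FreeGroup α} {a : α} {v : List (α × Bool)} (h : CanForm u a v)
    (z : FreeGroup α) (e : Bool) (hz : ¬ (v ++ [(a, !e)]) <+: z.toWord) :
    (v ++ [(a, e)]) <+: (sgn u e * z).toWord := by
  obtain ⟨hv, ha, rfl⟩ := h
  set y := (mk v)⁻¹ * z with hy
  have hz' : z = mk v * y := by rw [hy, mul_inv_cancel_left]
  have key : IsReduced ((a, e) :: y.toWord) := by
    refine List.isChain_cons.2 ⟨?_, isReduced_toWord⟩
    rintro ⟨b, d⟩ hb hab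
    simp only at hab
    subst hab
    simp only
    by_contra hed
    obtain rfl : d = !e := by
      revert hed; cases d <;> cases e <;> decide
    obtain ⟨t, ht⟩ : ∃ t, y.toWord = (a, !e) :: t := by
      cases hw : y.toWord with
      | nil => simp [hw] at hb
      | cons x t => simp [hw] at hb; exact ⟨t, by rw [hb]⟩
    apply hz
    have hr := isReduced_append_cons hv ha (ht ▸ (isReduced_toWord (x := y)))
    have : z = mk (v ++ (a, !e) :: t) := by
      rw [← ht, ← FreeGroup.mul_mk, mk_toWord, hz']
    rw [this, toWord_mk, hr.reduce_eq]
    exact ⟨t, by simp⟩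
  have hr := isReduced_append_cons hv ha key
  have : sgn (mk v * of a * (mk v)⁻¹) e * z = mk (v ++ (a, e) :: y.toWord) := by
    rw [mk_append_cons, sgn_conj, mk_toWord, hz']
    group
  rw [this, toWord_mk, hr.reduce_eq]
  exact ⟨y.toWord, by simp⟩

/-- Conjugation along a cancelling prefix `v' a' ^ (±1)` of `v` shortens `u`. -/
theorem CanForm.norm_conj_lt {u u' : FreeGroup α} {a a' : α} {v v' : List (α × Bool)} {e : Bool}
    (h : CanForm u a v) (h' : CanForm u' a' v') (hp : v' ++ [(a', e)] <+: v) :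
    norm ((sgn u' e)⁻¹ * u * sgn u' e) < norm u := by
  obtain ⟨t, ht⟩ := hp
  rw [h.norm_eq, conj_eq h.2.2 h'.2.2 (t := t) (e := e) (by simpa using ht.symm)]
  have := norm_conj_le (v' ++ t) a
  rw [← ht]
  simp at *
  omega

/-- Conjugating `u` by `u' ^ (±1)` never preserves the length: either the conjugating word of `u`
has the cancelling prefix, or the conjugate has a prefix that makes the inverse move shorten. -/
theorem CanForm.prefix_or_lt {u u' : FreeGroup α} {a a' : α} {v v' : List (α × Bool)} (e : Bool)
    (h : CanForm u a v) (h' : CanForm u' a' v') (ha : a' ≠ a) :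
    v' ++ [(a', e)] <+: v ∨ norm u < norm ((sgn u' e)⁻¹ * u * sgn u' e) := by
  by_cases hp : v' ++ [(a', e)] <+: v
  · exact Or.inl hp
  right
  have hv : (mk v).toWord = v := by rw [toWord_mk, h.1.reduce_eq]
  have h1 := h'.pingpong (mk v) (!e) (by simpa [hv] using hp)
  obtain ⟨w, hw, hwp⟩ := exists_canForm (sgn u' (!e) * mk v) a
  have h2 := hw.norm_conj_lt h' (hwp _ _ (by simpa using ha) h1)
  convert h2 using 2
  · rw [sgn_not]
    simp only [h.2.2]
    group
  · rw [sgn_not]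
    simp only [h.2.2]
    group

end

/-! ### Uniqueness of local minima -/

section

open Relation

/-- A form of Newman's lemma. Let `E` be a symmetric relation along which the level `L` always
changes, and suppose that any two lower neighbours of a vertex are joined by a path lying strictly
below that vertex. Then two local minima of `L` in the same component coincide. -/
theorem eq_of_connected {V : Type*} (E : V → V → Prop) (hsym : ∀ x y, E x y → E y x) (L : V → ℕ)
    (hne : ∀ x y, E x y → L x ≠ L y)
    (peak : ∀ a b c, E a b → E a c → L b < L a → L c < L a →
      ReflTransGen (fun x y => E x y ∧ L x < L a ∧ L y < L a) b c)
    {x y : V} (h : ReflTransGen E x y) (hx : ∀ z, E x z → L x ≤ L z)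
    (hy : ∀ z, E y z → L y ≤ L z) : x = y := by
  set r : V → V → Prop := fun a b => E a b ∧ L b < L a with hr
  set T : V → V → Prop := fun g t => ReflTransGen r g t ∧ ∀ z, E t z → L t ≤ L z with hT
  have exT : ∀ N g, L g = N → ∃ t, T g t := by
    intro N
    induction N using Nat.strong_induction_on with
    | _ N ih =>
      intro g hg
      by_cases hm : ∀ z, E g z → L g ≤ L z
      · exact ⟨g, ReflTransGen.refl, hm⟩
      · push Not at hm
        obtain ⟨z, hz, hlt⟩ := hm
        obtain ⟨t, ht, htm⟩ := ih (L z) (hg ▸ hlt) z rfl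
        exact ⟨t, ReflTransGen.head ⟨hz, hlt⟩ ht, htm⟩
  have uniq : ∀ N g, L g = N → ∀ t t', T g t → T g t' → t = t' := by
    intro N
    induction N using Nat.strong_induction_on with
    | _ N ih =>
      -- below level `N`, terminal vertices are constant along edges, hence along paths
      have edge : ∀ a b, E a b → L a < N → L b < N → ∀ t t', T a t → T b t' → t = t' := by
        intro a b hab ha hb t t' hat hbt
        rcases lt_or_gt_of_ne (hne a b hab) with hl | hl
        · exact ih (L b) hb b rfl t t' ⟨ReflTransGen.head ⟨hsym _ _ hab, hl⟩ hat.1, hat.2⟩ hbt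
        · exact ih (L a) ha a rfl t t' hat ⟨ReflTransGen.head ⟨hab, hl⟩ hbt.1, hbt.2⟩
      have path : ∀ a b, ReflTransGen (fun x y => E x y ∧ L x < N ∧ L y < N) a b → L a < N →
          ∀ t t', T a t → T b t' → t = t' := by
        intro a b hab ha
        induction hab with
        | refl => exact fun t t' h h' => ih (L a) ha a rfl t t' h h'
        | tail _ hbc ihb =>
          intro t t' h h'
          obtain ⟨t₁, ht₁⟩ := exT _ _ rfl
          exact (ihb t t₁ h ht₁).trans (edge _ _ hbc.1 hbc.2.1 hbc.2.2 t₁ t' ht₁ h')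
      intro g hg t t' ht ht'
      rcases ReflTransGen.cases_head ht.1 with rfl | ⟨b, hb, hbt⟩
      · rcases ReflTransGen.cases_head ht'.1 with rfl | ⟨c, hc, hct⟩
        · rfl
        · exact absurd hc.2 (not_lt.2 (ht.2 c hc.1))
      · rcases ReflTransGen.cases_head ht'.1 with rfl | ⟨c, hc, hct⟩
        · exact absurd hb.2 (not_lt.2 (ht'.2 b hb.1))
        · have := peak g b c hb.1 hc.1 hb.2 hc.2
          rw [hg] at this
          exact path b c this (hg ▸ hb.2) t t' ⟨hbt, ht.2⟩ ⟨hct, ht'.2⟩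
  have all : ∀ t t', T x t → T y t' → t = t' := by
    clear hy
    induction h with
    | refl => exact fun t t' h h' => uniq _ x rfl t t' h h'
    | @tail b c _ hbc ihb =>
      intro t t' h h'
      obtain ⟨t₁, ht₁⟩ := exT _ b rfl
      refine (ihb t t₁ h ht₁).trans ?_
      rcases lt_or_gt_of_ne (hne b c hbc) with hl | hl
      · exact uniq _ c rfl _ _ ⟨ReflTransGen.head ⟨hsym _ _ hbc, hl⟩ ht₁.1, ht₁.2⟩ h'
      · exact uniq _ b rfl _ _ ht₁ ⟨ReflTransGen.head ⟨hbc, hl⟩ h'.1, h'.2⟩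
  exact all x y ⟨ReflTransGen.refl, hx⟩ ⟨ReflTransGen.refl, hy⟩

end

/-! ### Groups satisfying the welded braid relations -/

section

/-- Elements `s i`, `r i` (`i + 1 < n`) of a group that satisfy the welded braid relations, with
the homomorphism `p` onto permutations sending both to the transposition `(i, i + 1)`. Values with
`i + 1 ≥ n` are irrelevant. -/
structure Welded (n : ℕ) (G : Type*) [Group G] where
  s : ℕ → G
  r : ℕ → G
  p : G →* Equiv.Perm ℕ
  ps : ∀ i, i + 1 < n → p (s i) = Equiv.swap i (i + 1)
  pr : ∀ i, i + 1 < n → p (r i) = Equiv.swap i (i + 1)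
  ss : ∀ i j, i + 1 < j → j + 1 < n → s i * s j = s j * s i
  rr : ∀ i j, i + 1 < j → j + 1 < n → r i * r j = r j * r i
  rs : ∀ i j, i + 1 < j → j + 1 < n → r i * s j = s j * r i
  sr : ∀ i j, i + 1 < j → j + 1 < n → r j * s i = s i * r j
  sss : ∀ i, i + 2 < n → s i * s (i + 1) * s i = s (i + 1) * s i * s (i + 1)
  rrr : ∀ i, i + 2 < n → r i * r (i + 1) * r i = r (i + 1) * r i * r (i + 1)
  r2 : ∀ i, i + 1 < n → r i * r i = 1
  rrs : ∀ i, i + 2 < n → r (i + 1) * r i * s (i + 1) = s i * r (i + 1) * r i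
  ssr : ∀ i, i + 2 < n → s (i + 1) * s i * r (i + 1) = r i * s (i + 1) * s i

namespace Welded

variable {n : ℕ} {G : Type*} [Group G] (W : Welded n G)

theorem r_inv {i : ℕ} (hi : i + 1 < n) : (W.r i)⁻¹ = W.r i :=
  inv_eq_of_mul_eq_one_left (W.r2 i hi)

/-- The subgroup generated by the `r i` with `k ≤ i`. -/
def H (k : ℕ) : Subgroup G := Subgroup.closure {g | ∃ i, k ≤ i ∧ i + 1 < n ∧ g = W.r i}

theorem r_mem {k i : ℕ} (hk : k ≤ i) (hi : i + 1 < n) : W.r i ∈ W.H k :=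
  Subgroup.subset_closure ⟨i, hk, hi, rfl⟩

theorem H_le (k : ℕ) : W.H k ≤ W.H 0 :=
  Subgroup.closure_mono fun _ ⟨i, _, hi, h⟩ => ⟨i, Nat.zero_le _, hi, h⟩

/-- Induction on elements of `H k`, multiplying by generators on the right. -/
theorem H_induction {k : ℕ} {P : (g : G) → g ∈ W.H k → Prop} (one : P 1 (one_mem _))
    (step : ∀ g i (hg : g ∈ W.H k) (hk : k ≤ i) (hi : i + 1 < n), P g hg →
      P (g * W.r i) (mul_mem hg (W.r_mem hk hi))) {g : G} (hg : g ∈ W.H k) : P g hg := by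
  induction hg using Subgroup.closure_induction_right with
  | one => exact one
  | mul_right x hx y hy ih =>
    obtain ⟨i, hk, hi, rfl⟩ := hy
    exact step x i hx hk hi ih
  | mul_inv_cancel x hx y hy ih =>
    obtain ⟨i, hk, hi, rfl⟩ := hy
    simp only [W.r_inv hi]
    exact step x i hx hk hi ih

theorem p_r_apply {i : ℕ} (hi : i + 1 < n) (j : ℕ) :
    W.p (W.r i) j = if j = i then i + 1 else if j = i + 1 then i else j := by
  rw [W.pr i hi, Equiv.swap_apply_def]

theorem p_fix {k : ℕ} {g : G} (hg : g ∈ W.H k) : ∀ j, j < k ∨ n ≤ j → W.p g j = j := by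
  induction hg using W.H_induction with
  | one => simp
  | step g i _ hk hi ih =>
    intro j hj
    rw [map_mul, Equiv.Perm.mul_apply, W.p_r_apply hi, if_neg (by omega), if_neg (by omega),
      ih j hj]

theorem p_lt {g : G} (hg : g ∈ W.H 0) {j : ℕ} (hj : j < n) : W.p g j < n := by
  by_contra h
  have h1 := W.p_fix hg (W.p g j) (Or.inr (by omega))
  have h2 := (W.p g).injective h1
  omega

theorem p_inv_lt {g : G} (hg : g ∈ W.H 0) {j : ℕ} (hj : j < n) : (W.p g)⁻¹ j < n := by
  rw [← map_inv]
  exact W.p_lt (inv_mem hg) hj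

/-- The product `r k * r (k + 1) * ⋯ * r (k + d - 1)`. -/
def run (k : ℕ) : ℕ → G
  | 0 => 1
  | d + 1 => run k d * W.r (k + d)

theorem run_mem (k d : ℕ) (hd : k + d < n ∨ d = 0) : W.run k d ∈ W.H k := by
  induction d with
  | zero => exact one_mem _
  | succ d ih => exact mul_mem (ih (by omega)) (W.r_mem (by omega) (by omega))

theorem p_run (k d : ℕ) (hd : k + d < n ∨ d = 0) : W.p (W.run k d) (k + d) = k := by
  induction d with
  | zero => simp [run]
  | succ d ih =>
    rw [run, map_mul, Equiv.Perm.mul_apply, W.p_r_apply (by omega), if_neg (by omega),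
      if_pos (by omega), ih (by omega)]

theorem run_comm (k d i : ℕ) (h : k + d ≤ i) (hi : i + 2 < n) :
    W.run k d * W.r (i + 1) = W.r (i + 1) * W.run k d := by
  induction d with
  | zero => simp [run]
  | succ d ih =>
    rw [run, mul_assoc, W.rr (k + d) (i + 1) (by omega) (by omega), ← mul_assoc, ih (by omega),
      mul_assoc]

theorem run_shift (k e d : ℕ) (h : k + e + 2 + d < n) :
    W.run k (e + 2 + d) * W.r (k + e) = W.r (k + e + 1) * W.run k (e + 2 + d) := by
  induction d with
  | zero =>
    have h1 := W.rrr (k + e) (by omega)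
    have h2 := W.run_comm k e (k + e) le_rfl (by omega)
    simp only [run]
    rw [← Nat.add_assoc, mul_assoc, mul_assoc, ← mul_assoc (W.r (k + e)), h1, ← mul_assoc,
      ← mul_assoc, h2]
    simp only [mul_assoc]
  | succ d ih =>
    rw [← Nat.add_assoc, run, mul_assoc,
      ← W.rr (k + e) (k + (e + 2 + d)) (by omega) (by omega), ← mul_assoc, ih (by omega), mul_assoc]

/-- Coset representatives of `H (k + 1)` in `H k`. -/
theorem H_decomp {k : ℕ} {g : G} (hg : g ∈ W.H k) :
    ∃ h ∈ W.H (k + 1), ∃ d, (k + d < n ∨ d = 0) ∧ g = h * W.run k d := by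
  induction hg using W.H_induction with
  | one => exact ⟨1, one_mem _, 0, Or.inr rfl, by simp [run]⟩
  | step g i _ hk hi ih =>
    obtain ⟨h, hh, d, hd, rfl⟩ := ih
    rcases lt_trichotomy i (k + d) with hlt | rfl | hgt
    · rcases Nat.lt_or_ge (i + 1) (k + d) with h2 | h2
      · obtain ⟨e, rfl⟩ := Nat.exists_eq_add_of_le hk
        obtain ⟨d', rfl⟩ : ∃ d', d = e + 2 + d' := ⟨d - (e + 2), by omega⟩
        refine ⟨h * W.r (k + e + 1), mul_mem hh (W.r_mem (by omega) (by omega)), e + 2 + d', hd, ?_⟩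
        rw [mul_assoc, W.run_shift k e d' (by omega), mul_assoc]
      · obtain ⟨d', rfl⟩ : ∃ d', d = d' + 1 := ⟨d - 1, by omega⟩
        obtain rfl : i = k + d' := by omega
        refine ⟨h, hh, d', by omega, ?_⟩
        rw [run, mul_assoc, mul_assoc, W.r2 _ hi, mul_one]
    · exact ⟨h, hh, d + 1, by omega, by rw [run, mul_assoc]⟩
    · obtain ⟨j, rfl⟩ : ∃ j, i = j + 1 := ⟨i - 1, by omega⟩
      refine ⟨h * W.r (j + 1), mul_mem hh (W.r_mem (by omega) (by omega)), d, hd, ?_⟩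
      rw [mul_assoc, W.run_comm k d j (by omega) (by omega), mul_assoc]

/-- The stabiliser of the point `k` in `H k` is `H (k + 1)`. -/
theorem H_stab {k : ℕ} {g : G} (hg : g ∈ W.H k) (hk : W.p g k = k) : g ∈ W.H (k + 1) := by
  obtain ⟨h, hh, d, hd, rfl⟩ := W.H_decomp hg
  have h1 : W.p (h * W.run k d) (k + d) = k := by
    rw [map_mul, Equiv.Perm.mul_apply, W.p_run k d hd, W.p_fix hh k (by omega)]
  have h2 := (W.p _).injective (h1.trans hk.symm)
  obtain rfl : d = 0 := by omega
  simpa [run] using hh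

/-- The `r i` generate a copy of the symmetric group: `p` is injective on `H 0`. -/
theorem eq_one_of_p {g : G} (hg : g ∈ W.H 0) (h : ∀ j, j < n → W.p g j = j) : g = 1 := by
  have key : ∀ k, k ≤ n → g ∈ W.H k := by
    intro k
    induction k with
    | zero => exact fun _ => hg
    | succ k ih => exact fun hk => W.H_stab (ih (by omega)) (h k (by omega))
  have := key n le_rfl
  have e : {g | ∃ i, n ≤ i ∧ i + 1 < n ∧ g = W.r i} = ∅ := by
    ext g
    simp
    intro x hx hx'
    omega
  rw [H, e, Subgroup.closure_empty] at this
  simpa using this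

/-- The value at `k` of a permutation from `H 0` can be prescribed without changing the values at
smaller points. -/
theorem extend {g : G} (hg : g ∈ W.H 0) {k c : ℕ} (hc : c < n)
    (h : ∀ i, i < k → W.p g i ≠ c) :
    ∃ g' ∈ W.H 0, (∀ i, i < k → W.p g' i = W.p g i) ∧ W.p g' k = c := by
  set c' := (W.p g)⁻¹ c with hc'
  have e : W.p g c' = c := by simp [hc']
  have hc'n : c' < n := W.p_inv_lt hg hc
  have hkc : k ≤ c' := by
    by_contra hlt
    exact h c' (by omega) e
  obtain ⟨d, hd⟩ := Nat.exists_eq_add_of_le hkc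
  have hm := W.run_mem k d (by omega)
  refine ⟨g * (W.run k d)⁻¹, mul_mem hg (inv_mem (W.H_le _ hm)), ?_, ?_⟩
  · intro i hi
    rw [map_mul, Equiv.Perm.mul_apply, W.p_fix (inv_mem hm) i (Or.inl hi)]
  · rw [map_mul, Equiv.Perm.mul_apply, map_inv, Equiv.Perm.inv_eq_iff_eq.2
      (W.p_run k d (by omega)).symm, ← hd, e]

/-- Elements of `H 0` realise every injective assignment of values below `n`. -/
theorem exists_perm (f : ℕ → ℕ) (m : ℕ) (hm : m ≤ n) (hf : ∀ i, i < m → f i < n)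
    (hinj : ∀ i j, i < j → j < m → f i ≠ f j) : ∃ g ∈ W.H 0, ∀ i, i < m → W.p g i = f i := by
  induction m with
  | zero => exact ⟨1, one_mem _, by simp⟩
  | succ m ih =>
    obtain ⟨g, hg, h⟩ := ih (by omega) (fun i hi => hf i (by omega))
      (fun i j hij hj => hinj i j hij (by omega))
    obtain ⟨g', hg', h1, h2⟩ := W.extend hg (k := m) (c := f m) (hf m (by omega))
      (fun i hi => by rw [h i hi]; exact hinj i m hi (by omega))
    refine ⟨g', hg', fun i hi => ?_⟩
    rcases Nat.lt_succ_iff_lt_or_eq.1 hi with hi | rfl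
    · rw [h1 i hi, h i hi]
    · exact h2

theorem exists_perm2 {a b : ℕ} (ha : a < n) (hb : b < n) (hab : a ≠ b) :
    ∃ g ∈ W.H 0, W.p g 0 = a ∧ W.p g 1 = b := by
  obtain ⟨g, hg, h⟩ := W.exists_perm (fun i => if i = 0 then a else b) 2 (by omega)
    (by intro i _; split_ifs <;> assumption)
    (by intro i j hij hj; simp [show i = 0 by omega, show j = 1 by omega, hab])
  exact ⟨g, hg, by simpa using h 0 (by omega), by simpa using h 1 (by omega)⟩

theorem exists_perm3 {a b c : ℕ} (ha : a < n) (hb : b < n) (hc : c < n) (hab : a ≠ b)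
    (hac : a ≠ c) (hbc : b ≠ c) : ∃ g ∈ W.H 0, W.p g 0 = a ∧ W.p g 1 = b ∧ W.p g 2 = c := by
  obtain ⟨g, hg, h0, h1⟩ := W.exists_perm2 ha hb hab
  obtain ⟨g', hg', h, h2⟩ := W.extend hg (k := 2) (c := c) hc (by
    intro i hi
    interval_cases i <;> simp [h0, h1, hac, hbc])
  exact ⟨g', hg', by rw [h 0 (by omega), h0], by rw [h 1 (by omega), h1], h2⟩

theorem exists_perm4 {a b c d : ℕ} (ha : a < n) (hb : b < n) (hc : c < n) (hd : d < n)
    (hab : a ≠ b) (hac : a ≠ c) (hbc : b ≠ c) (had : a ≠ d) (hbd : b ≠ d) (hcd : c ≠ d) :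
    ∃ g ∈ W.H 0, W.p g 0 = a ∧ W.p g 1 = b ∧ W.p g 2 = c ∧ W.p g 3 = d := by
  obtain ⟨g, hg, h0, h1, h2⟩ := W.exists_perm3 ha hb hc hab hac hbc
  obtain ⟨g', hg', h, h3⟩ := W.extend hg (k := 3) (c := d) hd (by
    intro i hi
    interval_cases i <;> simp [h0, h1, h2, had, hbd, hcd])
  exact ⟨g', hg', by rw [h 0 (by omega), h0], by rw [h 1 (by omega), h1],
    by rw [h 2 (by omega), h2], h3⟩

open Classical in
/-- The basis-conjugating generator `χ a b`, mapping to `x_a ↦ x_b⁻¹ x_a x_b`: the conjugate of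
`s 0 * r 0` by an element of `H 0` that carries `(0, 1)` to `(a, b)` (and `1` if there is none). -/
noncomputable def chi (a b : ℕ) : G :=
  if h : ∃ g ∈ W.H 0, W.p g 0 = a ∧ W.p g 1 = b then
    h.choose * (W.s 0 * W.r 0) * h.choose⁻¹ else 1

/-- The pointwise stabiliser of `{0, 1}` commutes with `s 0 * r 0`. -/
theorem H_two_comm {g : G} (hg : g ∈ W.H 2) : Commute g (W.s 0 * W.r 0) := by
  induction hg using W.H_induction with
  | one => exact Commute.one_left _
  | step g i _ hk hi ih =>
    exact ih.mul_left (Commute.mul_right (W.sr 0 i (by omega) hi) (W.rr 0 i (by omega) hi).symm)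

/-- The conjugate defining `chi a b` does not depend on the chosen conjugating element, since two
choices differ by an element of `H 2`. -/
theorem chi_eq {g : G} {a b : ℕ} (hg : g ∈ W.H 0) (ha : W.p g 0 = a) (hb : W.p g 1 = b) :
    W.chi a b = g * (W.s 0 * W.r 0) * g⁻¹ := by
  have h : ∃ g ∈ W.H 0, W.p g 0 = a ∧ W.p g 1 = b := ⟨g, hg, ha, hb⟩
  rw [chi, dif_pos h]
  obtain ⟨hg', ha', hb'⟩ := h.choose_spec
  set g' := h.choose
  have h0 : g⁻¹ * g' ∈ W.H 0 := mul_mem (inv_mem hg) hg'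
  have h1 := W.H_stab h0 (by
    rw [map_mul, map_inv, Equiv.Perm.mul_apply, ha', Equiv.Perm.inv_eq_iff_eq, ha])
  have h2 := W.H_stab h1 (by
    rw [map_mul, map_inv, Equiv.Perm.mul_apply, zero_add, hb', Equiv.Perm.inv_eq_iff_eq, hb])
  have h3 := (W.H_two_comm h2).eq
  rw [mul_inv_eq_iff_eq_mul]
  calc g' * (W.s 0 * W.r 0) = g * ((g⁻¹ * g') * (W.s 0 * W.r 0)) := by group
    _ = _ := by rw [h3]; group

theorem chi_conj {g : G} (hg : g ∈ W.H 0) {a b : ℕ} (ha : a < n) (hb : b < n) (hab : a ≠ b) :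
    g * W.chi a b * g⁻¹ = W.chi (W.p g a) (W.p g b) := by
  obtain ⟨k, hk, h0, h1⟩ := W.exists_perm2 ha hb hab
  rw [W.chi_eq hk h0 h1, W.chi_eq (g := g * k) (mul_mem hg hk) (by simp [h0]) (by simp [h1])]
  group

theorem chi_adj (i : ℕ) (hi : i + 1 < n) : W.chi i (i + 1) = W.s i * W.r i := by
  induction i with
  | zero => rw [W.chi_eq (one_mem _) (by simp) (by simp)]; simp
  | succ i ih =>
    have hm : W.r (i + 1) * W.r i ∈ W.H 0 :=
      mul_mem (W.r_mem (by omega) hi) (W.r_mem (by omega) (by omega))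
    have h := W.chi_conj hm (a := i + 1) (b := i + 2) (by omega) (by omega) (by omega)
    have e1 : W.p (W.r (i + 1) * W.r i) (i + 1) = i := by
      simp [W.p_r_apply (i := i) (by omega), W.p_r_apply (i := i + 1) (by omega)]
      omega
    have e2 : W.p (W.r (i + 1) * W.r i) (i + 2) = i + 1 := by
      simp [W.p_r_apply (i := i) (by omega), W.p_r_apply (i := i + 1) (by omega)]
    rw [e1, e2, ih (by omega), mul_inv_eq_iff_eq_mul] at h
    have h1 := W.rrs i hi
    have h2 := W.rrr i hi
    apply mul_left_cancel (a := W.r (i + 1) * W.r i)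
    rw [h, ← mul_assoc (W.r (i + 1) * W.r i), h1]
    simp only [mul_assoc] at h2 ⊢
    rw [h2]

theorem s_eq (i : ℕ) (hi : i + 1 < n) : W.s i = W.chi i (i + 1) * W.r i := by
  rw [W.chi_adj i hi, mul_assoc, W.r2 i hi, mul_one]

theorem r_chi {i a b a' b' : ℕ} (hi : i + 1 < n) (ha : a < n) (hb : b < n) (hab : a ≠ b)
    (ha' : W.p (W.r i) a = a') (hb' : W.p (W.r i) b = b') :
    W.r i * W.chi a b = W.chi a' b' * W.r i := by
  have h := W.chi_conj (W.r_mem (Nat.zero_le i) hi) ha hb hab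
  rw [ha', hb'] at h
  rw [← h]
  group

/-- The relation `s 1 * s 0 * r 1 = r 0 * s 1 * s 0` rewritten in terms of the `chi a b`. -/
theorem comm_base (h : 2 < n) : Commute (W.chi 1 2) (W.chi 0 2) := by
  have q := W.ssr 0 h
  have h1 := W.rrr 0 h
  have a1 : W.r 1 * W.chi 0 1 = W.chi 0 2 * W.r 1 :=
    W.r_chi h (by omega) (by omega) (by omega) (by simp [W.p_r_apply (i := 1) h])
      (by simp [W.p_r_apply (i := 1) h])
  have a2 : W.r 0 * W.chi 1 2 = W.chi 0 2 * W.r 0 :=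
    W.r_chi (by omega) (by omega) (by omega) (by omega)
      (by simp [W.p_r_apply (i := 0) (show 0 + 1 < n by omega)])
      (by simp [W.p_r_apply (i := 0) (show 0 + 1 < n by omega)])
  have a3 : W.r 0 * W.chi 0 2 = W.chi 1 2 * W.r 0 :=
    W.r_chi (by omega) (by omega) (by omega) (by omega)
      (by simp [W.p_r_apply (i := 0) (show 0 + 1 < n by omega)])
      (by simp [W.p_r_apply (i := 0) (show 0 + 1 < n by omega)])
  rw [W.s_eq 0 (by omega), W.s_eq (0 + 1) h] at q
  simp only [zero_add, Nat.reduceAdd] at q h1 a1 a2 a3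
  apply mul_right_cancel (b := W.r 0 * W.r 1 * W.r 0)
  calc W.chi 1 2 * W.chi 0 2 * (W.r 0 * W.r 1 * W.r 0)
      = W.chi 1 2 * (W.chi 0 2 * W.r 1) * W.r 0 * W.r 1 := by rw [h1]; group
    _ = W.chi 1 2 * W.r 1 * (W.chi 0 1 * W.r 0) * W.r 1 := by rw [← a1]; group
    _ = (W.r 0 * W.chi 1 2) * (W.r 1 * W.chi 0 1) * W.r 0 := by rw [q]; group
    _ = W.chi 0 2 * (W.r 0 * W.chi 0 2) * W.r 1 * W.r 0 := by rw [a1, a2]; group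
    _ = _ := by rw [a3]; group

/-- The braid relation between `s 0` and `s 1` rewritten in terms of the `chi a b`. -/
theorem triple_base (h : 2 < n) : Commute (W.chi 0 2 * W.chi 1 2) (W.chi 0 1) := by
  have q := W.sss 0 h
  have h1 := W.rrr 0 h
  have a1 : W.r 1 * W.chi 0 1 = W.chi 0 2 * W.r 1 :=
    W.r_chi h (by omega) (by omega) (by omega) (by simp [W.p_r_apply (i := 1) h])
      (by simp [W.p_r_apply (i := 1) h])
  have a2 : W.r 0 * W.chi 1 2 = W.chi 0 2 * W.r 0 :=
    W.r_chi (by omega) (by omega) (by omega) (by omega)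
      (by simp [W.p_r_apply (i := 0) (show 0 + 1 < n by omega)])
      (by simp [W.p_r_apply (i := 0) (show 0 + 1 < n by omega)])
  have a3 : W.r 0 * W.chi 0 2 = W.chi 1 2 * W.r 0 :=
    W.r_chi (by omega) (by omega) (by omega) (by omega)
      (by simp [W.p_r_apply (i := 0) (show 0 + 1 < n by omega)])
      (by simp [W.p_r_apply (i := 0) (show 0 + 1 < n by omega)])
  have a4 : W.r 1 * W.chi 0 2 = W.chi 0 1 * W.r 1 :=
    W.r_chi h (by omega) (by omega) (by omega) (by simp [W.p_r_apply (i := 1) h])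
      (by simp [W.p_r_apply (i := 1) h])
  have c := W.comm_base h
  rw [W.s_eq 0 (by omega), W.s_eq (0 + 1) h] at q
  simp only [zero_add, Nat.reduceAdd] at q h1 a1 a2 a3 a4
  apply mul_right_cancel (b := W.r 0 * W.r 1 * W.r 0)
  calc W.chi 0 2 * W.chi 1 2 * W.chi 0 1 * (W.r 0 * W.r 1 * W.r 0)
      = W.chi 1 2 * W.chi 0 2 * (W.chi 0 1 * W.r 1) * W.r 0 * W.r 1 := by rw [h1, ← c.eq]; group
    _ = W.chi 1 2 * (W.chi 0 2 * W.r 1) * (W.chi 0 2 * W.r 0) * W.r 1 := by rw [← a4]; group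
    _ = W.chi 1 2 * W.r 1 * (W.chi 0 1 * W.r 0) * (W.chi 1 2 * W.r 1) := by
        rw [← a1, ← a2]; group
    _ = W.chi 0 1 * (W.r 0 * W.chi 1 2) * (W.r 1 * W.chi 0 1) * W.r 0 := by rw [← q]; group
    _ = W.chi 0 1 * W.chi 0 2 * (W.r 0 * W.chi 0 2) * W.r 1 * W.r 0 := by rw [a1, a2]; group
    _ = _ := by rw [a3]; group

/-- Conjugations of two distinct generators by the same generator commute. -/
theorem chi_comm {i j k : ℕ} (hi : i < n) (hj : j < n) (hk : k < n) (hij : i ≠ j) (hik : i ≠ k)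
    (hjk : j ≠ k) : Commute (W.chi i k) (W.chi j k) := by
  obtain ⟨g, hg, h0, h1, h2⟩ := W.exists_perm3 hi hj hk hij hik hjk
  rw [← h0, ← h1, ← h2, ← W.chi_conj hg (by omega) (by omega) (by omega),
    ← W.chi_conj hg (by omega) (by omega) (by omega)]
  exact (W.comm_base (by omega)).symm.map (MulAut.conj g)

/-- Conjugating both `x_i` and `x_j` by `x_k` commutes with conjugating `x_i` by `x_j`. -/
theorem chi_triple {i j k : ℕ} (hi : i < n) (hj : j < n) (hk : k < n) (hij : i ≠ j) (hik : i ≠ k)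
    (hjk : j ≠ k) : Commute (W.chi i k * W.chi j k) (W.chi i j) := by
  obtain ⟨g, hg, h0, h1, h2⟩ := W.exists_perm3 hi hj hk hij hik hjk
  rw [← h0, ← h1, ← h2, ← W.chi_conj hg (by omega) (by omega) (by omega),
    ← W.chi_conj hg (by omega) (by omega) (by omega),
    ← W.chi_conj hg (by omega) (by omega) (by omega)]
  have := (W.triple_base (by omega)).map (MulAut.conj g)
  rwa [map_mul] at this

theorem chi_disjoint {i j k l : ℕ} (hi : i < n) (hj : j < n) (hk : k < n) (hl : l < n)
    (hij : i ≠ j) (hik : i ≠ k) (hjk : j ≠ k) (hil : i ≠ l) (hjl : j ≠ l) (hkl : k ≠ l) :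
    Commute (W.chi i j) (W.chi k l) := by
  obtain ⟨g, hg, h0, h1, h2, h3⟩ := W.exists_perm4 hi hj hk hl hij hik hjk hil hjl hkl
  have base : Commute (W.chi 0 1) (W.chi 2 3) := by
    rw [W.chi_adj 0 (by omega), W.chi_adj 2 (by omega)]
    have c1 : Commute (W.s 0) (W.s 2) := W.ss 0 2 (by omega) (by omega)
    have c2 : Commute (W.s 0) (W.r 2) := (W.sr 0 2 (by omega) (by omega)).symm
    have c3 : Commute (W.r 0) (W.s 2) := W.rs 0 2 (by omega) (by omega)
    have c4 : Commute (W.r 0) (W.r 2) := W.rr 0 2 (by omega) (by omega)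
    exact (c1.mul_right c2).mul_left (c3.mul_right c4)
  rw [← h0, ← h1, ← h2, ← h3, ← W.chi_conj hg (by omega) (by omega) (by omega),
    ← W.chi_conj hg (by omega) (by omega) (by omega)]
  exact base.map (MulAut.conj g)

end Welded

end

/-! ### The action on the free group -/

section

open FreeGroup hiding map_mul map_one map_inv
open Relation

theorem xg_fin {n : ℕ} (k : Fin n) : xg n k = of k := by
  simp [xg]

theorem xg_lt {n k : ℕ} (h : k < n) : xg n k = of ⟨k, h⟩ := by
  simp [xg, h]

theorem PC_one (n : ℕ) : (1 : MulAut (FreeGroup (Fin n))) ∈ PCSet n :=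
  ⟨1, fun _ => 1, by simp⟩

theorem PC_mul {n : ℕ} {α β : MulAut (FreeGroup (Fin n))} (hα : α ∈ PCSet n) (hβ : β ∈ PCSet n) :
    α * β ∈ PCSet n := by
  obtain ⟨π, w, h⟩ := hα
  obtain ⟨π', w', h'⟩ := hβ
  refine ⟨π * π', fun i => w (π' i) * α (w' i), fun i => ?_⟩
  simp [MulAut.mul_apply, h', h, mul_assoc]

theorem PC_inv {n : ℕ} {α : MulAut (FreeGroup (Fin n))} (hα : α ∈ PCSet n) :
    α⁻¹ ∈ PCSet n := by
  obtain ⟨π, w, h⟩ := hα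
  refine ⟨π⁻¹, fun i => (α⁻¹ (w (π⁻¹ i)))⁻¹, fun i => ?_⟩
  have h1 := congrArg (fun z => α⁻¹ z) (h (π⁻¹ i))
  have h2 : π (π⁻¹ i) = i := π.apply_symm_apply i
  simp only [MulAut.inv_apply_self, map_mul, map_inv, h2] at h1
  rw [h1, inv_inv]
  simp only [mul_assoc, mul_inv_cancel, mul_one, mul_inv_cancel_left]

/-- A permutation-conjugacy automorphism sends each generator to a conjugate of a generator, in
canonical form. -/
theorem PC_canForm {n : ℕ} {α : MulAut (FreeGroup (Fin n))} (hα : α ∈ PCSet n) :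
    ∃ (π : Equiv.Perm (Fin n)) (v : Fin n → List (Fin n × Bool)),
      ∀ k, CanForm (α (of k)) (π k) (v k) := by
  obtain ⟨π, w, h⟩ := hα
  have : ∀ k, ∃ v, CanForm (α (of k)) (π k) v := by
    intro k
    obtain ⟨v, hv, -⟩ := exists_canForm (w k)⁻¹ (π k)
    rw [inv_inv, ← h k] at hv
    exact ⟨v, hv⟩
  choose v hv using this
  exact ⟨π, v, hv⟩

/-- If no conjugating word has a cancelling prefix, then all of them are trivial: by ping-pong, the
image of a reduced word starting with `x_i ^ (±1)` starts with `v_i x_{π i} ^ (±1)`, and every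
generator is such an image. -/
theorem canForm_trivial {n : ℕ} {α : MulAut (FreeGroup (Fin n))} {π : Equiv.Perm (Fin n)}
    {v : Fin n → List (Fin n × Bool)} (h : ∀ k, CanForm (α (of k)) (π k) (v k))
    (hno : ∀ i j e, i ≠ j → ¬ v j ++ [(π j, e)] <+: v i) (k : Fin n) : v k = [] := by
  have disj : ∀ (z : List (Fin n × Bool)) i j d e, (i, d) ≠ (j, e) → v i ++ [(π i, d)] <+: z →
      ¬ v j ++ [(π j, e)] <+: z := by
    intro z i j d e hne h1 h2
    have hx : ((π i, d) : Fin n × Bool) ≠ (π j, e) := by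
      intro hx
      simp only [Prod.mk.injEq, EmbeddingLike.apply_eq_iff_eq] at hx
      exact hne (by rw [hx.1, hx.2])
    by_cases hij : i = j
    · subst hij
      rcases prefix_nested hx h1 h2 with H | H <;> simpa using H.length_le
    · rcases prefix_nested hx h1 h2 with H | H
      · exact hno j i d (Ne.symm hij) H
      · exact hno i j e hij H
  have pp : ∀ (l : List (Fin n × Bool)) i e, IsReduced ((i, e) :: l) →
      v i ++ [(π i, e)] <+: (α (mk ((i, e) :: l))).toWord := by
    intro l
    induction l with
    | nil =>
      intro i e _
      have := (h i).pingpong 1 e (by simp)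
      rwa [mul_one, ← MulEquiv.coe_toMonoidHom, ← map_sgn, ← mk_single] at this
    | cons x l ih =>
      intro i e hr
      obtain ⟨j, d⟩ := x
      have hr' := List.isChain_cons_cons.1 hr
      have := (h i).pingpong (α (mk ((j, d) :: l))) e (disj _ j i d (!e) (by
        intro hx
        simp only [Prod.mk.injEq] at hx
        have := hr'.1 hx.1.symm
        simp only at this
        rw [hx.2] at this
        cases e <;> simp at this) (ih j d hr'.2))
      rwa [← MulEquiv.coe_toMonoidHom, ← map_sgn, ← map_mul, ← mk_single, FreeGroup.mul_mk,
        List.singleton_append] at this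
  obtain ⟨y, hy⟩ := α.surjective (of (π k))
  cases hw : y.toWord with
  | nil =>
    rw [toWord_eq_nil_iff] at hw
    rw [hw, map_one] at hy
    exact absurd hy (one_ne_of _)
  | cons x l =>
    obtain ⟨i, e⟩ := x
    have := pp l i e (hw ▸ isReduced_toWord)
    rw [← hw, mk_toWord, hy, toWord_of] at this
    have hl := this.length_le
    have hv : v i = [] := by
      rw [← List.length_eq_zero_iff]
      simpa using hl
    rw [hv] at this
    simp at this
    rw [← this.1, hv]

/-- The total length of the images of the generators. -/
def lev {n : ℕ} (α : MulAut (FreeGroup (Fin n))) : ℕ := ∑ k, FreeGroup.norm (α (of k))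

theorem lev_lt {n : ℕ} {α β : MulAut (FreeGroup (Fin n))}
    (h : ∀ k, FreeGroup.norm (α (of k)) ≤ FreeGroup.norm (β (of k))) (i : Fin n)
    (hi : FreeGroup.norm (α (of i)) < FreeGroup.norm (β (of i))) : lev α < lev β :=
  Finset.sum_lt_sum (fun k _ => h k) ⟨i, Finset.mem_univ _, hi⟩

theorem le_lev {n : ℕ} (α : MulAut (FreeGroup (Fin n))) : n ≤ lev α := by
  have : ∑ _k : Fin n, 1 ≤ lev α := by
    refine Finset.sum_le_sum fun k _ => ?_
    rw [Nat.one_le_iff_ne_zero, Ne, FreeGroup.norm_eq_zero, EmbeddingLike.map_eq_one_iff]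
    exact of_ne_one k
  simpa using this

namespace Welded

variable {n : ℕ} {G : Type*} [Group G] (W : Welded n G)

/-- The elementary move: conjugation of `x_i` by `x_j` (`e = true`) or `x_j⁻¹` (`e = false`). -/
noncomputable def ch (i j : Fin n) (e : Bool) : G := sgn (W.chi i j) e

/-- The elements of `H 0` act by permuting the generators. -/
theorem act_H (φ : G →* MulAut (FreeGroup (Fin n)))
    (hρ : ∀ i, i + 1 < n → IsRho n i (φ (W.r i))) {g : G} (hg : g ∈ W.H 0) :
    ∀ k, k < n → φ g (xg n k) = xg n (W.p g k) := by
  induction hg using W.H_induction with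
  | one => simp
  | step g i hg _ hi ih =>
    intro k hk
    obtain ⟨h1, h2, h3⟩ := hρ i hi
    rw [map_mul, map_mul, MulAut.mul_apply, Equiv.Perm.mul_apply, W.p_r_apply hi]
    split_ifs with h h'
    · rw [h, h1, ih _ hi]
    · rw [h', h2, ih _ (by omega)]
    · rw [h3 k hk h h', ih k hk]

theorem act_chi (φ : G →* MulAut (FreeGroup (Fin n)))
    (hσ : ∀ i, i + 1 < n → IsSigma n i (φ (W.s i)))
    (hρ : ∀ i, i + 1 < n → IsRho n i (φ (W.r i))) {a b k : ℕ} (ha : a < n) (hb : b < n)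
    (hk : k < n) (hab : a ≠ b) :
    φ (W.chi a b) (xg n k) = if k = a then (xg n b)⁻¹ * xg n a * xg n b else xg n k := by
  have base : ∀ k, k < n → φ (W.s 0 * W.r 0) (xg n k) =
      if k = 0 then (xg n 1)⁻¹ * xg n 0 * xg n 1 else xg n k := by
    intro k hk
    obtain ⟨s1, s2, s3⟩ := hσ 0 (by omega)
    obtain ⟨r1, r2, r3⟩ := hρ 0 (by omega)
    rw [map_mul, MulAut.mul_apply]
    by_cases h0 : k = 0
    · rw [if_pos h0, h0, r1, s2]
    · rw [if_neg h0]
      by_cases h1 : k = 0 + 1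
      · rw [h1, r2, s1]
      · rw [r3 k hk h0 h1, s3 k hk h0 h1]
  obtain ⟨g, hg, h0, h1⟩ := W.exists_perm2 ha hb hab
  have hk' := W.p_lt (inv_mem hg) hk
  rw [W.chi_eq hg h0 h1, map_mul, map_mul, MulAut.mul_apply, MulAut.mul_apply,
    W.act_H φ hρ (inv_mem hg) k hk, base _ hk']
  have e : W.p g⁻¹ k = 0 ↔ k = a := by rw [map_inv, Equiv.Perm.inv_eq_iff_eq, h0]
  rw [if_congr e rfl rfl]
  split_ifs with h
  · rw [map_mul, map_mul, map_inv, W.act_H φ hρ hg 1 (by omega), W.act_H φ hρ hg 0 (by omega),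
      h0, h1]
  · rw [W.act_H φ hρ hg _ hk', map_inv]
    exact congrArg (xg n) ((W.p g).apply_symm_apply k)

theorem act_ch (φ : G →* MulAut (FreeGroup (Fin n)))
    (hσ : ∀ i, i + 1 < n → IsSigma n i (φ (W.s i)))
    (hρ : ∀ i, i + 1 < n → IsRho n i (φ (W.r i))) (α : MulAut (FreeGroup (Fin n)))
    {i j : Fin n} (hij : i ≠ j) (e : Bool) (k : Fin n) :
    (α * φ (W.ch i j e)) (of k) =
      if k = i then (sgn (α (of j)) e)⁻¹ * α (of i) * sgn (α (of j)) e else α (of k) := by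
  have hij' : (i : ℕ) ≠ j := fun h => hij (Fin.ext h)
  have H : ∀ k : Fin n, φ (W.chi i j) (of k) =
      if k = i then (of j)⁻¹ * of i * of j else of k := by
    intro k
    have := W.act_chi φ hσ hρ i.2 j.2 k.2 hij'
    simpa only [xg_fin, Fin.val_inj] using this
  have H' : ∀ k : Fin n, φ (W.ch i j e) (of k) =
      if k = i then (sgn (of j) e)⁻¹ * of i * sgn (of j) e else of k := by
    intro k
    cases e with
    | true => simpa [ch, sgn] using H k
    | false =>
      have hi := H i
      have hj := H j
      have hk := H k
      rw [if_pos rfl] at hi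
      rw [if_neg (Ne.symm hij)] at hj
      simp only [ch, sgn, map_inv, Bool.false_eq_true, if_false, inv_inv]
      apply (φ (W.chi i j)).injective
      rw [MulAut.apply_inv_self]
      split_ifs with h
      · subst h
        rw [map_mul, map_mul, map_inv, hi, hj]
        group
      · rw [hk, if_neg h]
  rw [MulAut.mul_apply, H']
  split_ifs with h
  · rw [map_mul, map_mul, map_inv, ← MulEquiv.coe_toMonoidHom, map_sgn]
  · rfl

theorem map_mem_PC (φ : G →* MulAut (FreeGroup (Fin n)))
    (hσ : ∀ i, i + 1 < n → IsSigma n i (φ (W.s i)))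
    (hρ : ∀ i, i + 1 < n → IsRho n i (φ (W.r i)))
    (hgen : Subgroup.closure {g | ∃ i, i + 1 < n ∧ (g = W.s i ∨ g = W.r i)} = ⊤) (g : G) :
    φ g ∈ PCSet n := by
  have hg : g ∈ Subgroup.closure {g | ∃ i, i + 1 < n ∧ (g = W.s i ∨ g = W.r i)} := by
    rw [hgen]; trivial
  induction hg using Subgroup.closure_induction with
  | one => rw [map_one]; exact PC_one n
  | mul x y _ _ hx hy => rw [map_mul]; exact PC_mul hx hy
  | inv x _ hx => rw [map_inv]; exact PC_inv hx
  | mem x hx =>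
    obtain ⟨i, hi, rfl | rfl⟩ := hx
    · obtain ⟨h1, h2, h3⟩ := hσ i hi
      refine ⟨Equiv.swap ⟨i, by omega⟩ ⟨i + 1, hi⟩,
        fun k => if (k : ℕ) = i + 1 then xg n (i + 1) else 1, fun k => ?_⟩
      rw [← xg_fin, ← xg_fin, Equiv.swap_apply_def]
      simp only [Fin.ext_iff]
      by_cases hk : (k : ℕ) = i
      · simp [hk, h1]
      · by_cases hk' : (k : ℕ) = i + 1
        · simp [hk', h2]
        · simp [hk, hk', h3 k k.2 hk hk']
    · obtain ⟨h1, h2, h3⟩ := hρ i hi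
      refine ⟨Equiv.swap ⟨i, by omega⟩ ⟨i + 1, hi⟩, fun k => 1, fun k => ?_⟩
      rw [← xg_fin, ← xg_fin, Equiv.swap_apply_def]
      simp only [Fin.ext_iff]
      by_cases hk : (k : ℕ) = i
      · simp [hk, h1]
      · by_cases hk' : (k : ℕ) = i + 1
        · simp [hk', h2]
        · simp [hk, hk', h3 k k.2 hk hk']

/-- Every permutation-conjugacy automorphism is in the image: shorten it by elementary moves until
it permutes the generators. -/
theorem PC_subset_range (φ : G →* MulAut (FreeGroup (Fin n)))
    (hσ : ∀ i, i + 1 < n → IsSigma n i (φ (W.s i)))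
    (hρ : ∀ i, i + 1 < n → IsRho n i (φ (W.r i)))
    (hPC : ∀ g, φ g ∈ PCSet n) (N : ℕ) :
    ∀ α ∈ PCSet n, lev α = N → ∃ g, φ g = α := by
  induction N using Nat.strong_induction_on with
  | _ N ih =>
    intro α hα hN
    obtain ⟨π, v, hv⟩ := PC_canForm hα
    by_cases hno : ∀ i j e, i ≠ j → ¬ v j ++ [(π j, e)] <+: v i
    · have hπ : ∀ k, α (of k) = of (π k) := by
        intro k
        have := (hv k).2.2
        rw [canForm_trivial hv hno k] at this
        simpa [← one_eq_mk] using this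
      obtain ⟨g, hg, hgp⟩ := W.exists_perm (fun k => if h : k < n then π ⟨k, h⟩ else 0) n le_rfl
        (fun i hi => by simp [hi])
        (fun i j hij hj => by
          simp only [hj, hij.trans hj, dif_pos]
          intro h
          have := π.injective (Fin.ext h)
          simp only [Fin.mk.injEq] at this
          omega)
      refine ⟨g, MulEquiv.toMonoidHom_injective (FreeGroup.ext_hom _ _ fun k => ?_)⟩
      have h1 := W.act_H φ hρ hg k k.2
      rw [hgp k k.2, dif_pos k.2, xg_fin, xg_fin] at h1
      exact h1.trans (hπ k).symm
    · push Not at hno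
      obtain ⟨i, j, e, hij, hp⟩ := hno
      have hlt := (hv i).norm_conj_lt (hv j) hp
      obtain ⟨g, hg⟩ := ih (lev (α * φ (W.ch i j e))) (by
        rw [← hN]
        refine lev_lt (fun k => ?_) i ?_
        · rw [W.act_ch φ hσ hρ α hij e]
          split_ifs with h
          · rw [h]; exact hlt.le
          · exact le_rfl
        · rw [W.act_ch φ hσ hρ α hij e, if_pos rfl]
          exact hlt) _ (PC_mul hα (hPC _)) rfl
      exact ⟨g * (W.ch i j e)⁻¹, by rw [map_mul, hg, map_inv, mul_inv_cancel_right]⟩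

/-- The group is the product of the subgroup generated by the `chi i j`, which `H 0` normalises, and
`H 0`. -/
theorem exists_decomp
    (hgen : Subgroup.closure {g | ∃ i, i + 1 < n ∧ (g = W.s i ∨ g = W.r i)} = ⊤) (g : G) :
    ∃ q ∈ Subgroup.closure {g | ∃ i j : Fin n, i ≠ j ∧ g = W.chi i j}, ∃ r ∈ W.H 0,
      g = q * r := by
  set P := Subgroup.closure {g | ∃ i j : Fin n, i ≠ j ∧ g = W.chi i j} with hP
  have conj : ∀ i, i + 1 < n → ∀ r ∈ W.H 0, r * W.chi i (i + 1) * r⁻¹ ∈ P := by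
    intro i hi r hr
    rw [W.chi_conj hr (by omega) hi (by omega)]
    refine Subgroup.subset_closure
      ⟨⟨_, W.p_lt hr (show i < n by omega)⟩, ⟨_, W.p_lt hr hi⟩, ?_, rfl⟩
    intro h
    have := (W.p r).injective (Fin.mk.inj h)
    omega
  have hg : g ∈ Subgroup.closure {g | ∃ i, i + 1 < n ∧ (g = W.s i ∨ g = W.r i)} := by
    rw [hgen]; trivial
  induction hg using Subgroup.closure_induction_right with
  | one => exact ⟨1, one_mem _, 1, one_mem _, by simp⟩
  | mul_right x _ y hy ih =>
    obtain ⟨q, hq, r, hr, rfl⟩ := ih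
    obtain ⟨i, hi, rfl | rfl⟩ := hy
    · refine ⟨q * (r * W.chi i (i + 1) * r⁻¹), mul_mem hq (conj i hi r hr), r * W.r i,
        mul_mem hr (W.r_mem (Nat.zero_le i) hi), ?_⟩
      rw [W.s_eq i hi]
      group
    · exact ⟨q, hq, r * W.r i, mul_mem hr (W.r_mem (Nat.zero_le i) hi), mul_assoc _ _ _⟩
  | mul_inv_cancel x _ y hy ih =>
    obtain ⟨q, hq, r, hr, rfl⟩ := ih
    obtain ⟨i, hi, rfl | rfl⟩ := hy
    · have hm := mul_mem hr (W.r_mem (Nat.zero_le i) hi)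
      refine ⟨q * ((r * W.r i) * W.chi i (i + 1) * (r * W.r i)⁻¹)⁻¹,
        mul_mem hq (inv_mem (conj i hi _ hm)), r * W.r i, hm, ?_⟩
      rw [W.s_eq i hi, mul_inv_rev, W.r_inv hi]
      group
    · rw [W.r_inv hi]
      exact ⟨q, hq, r * W.r i, mul_mem hr (W.r_mem (Nat.zero_le i) hi), mul_assoc _ _ _⟩

end Welded

end

/-! ### Peak reduction and faithfulness -/

section

open FreeGroup hiding map_mul map_one map_inv
open Relation

theorem sgn_mul {G : Type*} [Group G] {u v : G} (h : Commute u v) (e : Bool) :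
    sgn (u * v) e = sgn u e * sgn v e := by
  cases e
  · simp [sgn, h.eq]
  · simp [sgn]

namespace Welded

variable {n : ℕ} {G : Type*} [Group G] (W : Welded n G)

/-- The graph on `G` whose edges are right multiplications by elementary moves. -/
def Adj (g h : G) : Prop := ∃ i j e, i ≠ j ∧ h = g * W.ch i j e

theorem ch_not (i j : Fin n) (e : Bool) : W.ch i j (!e) = (W.ch i j e)⁻¹ := sgn_not _ e

theorem adj_symm (g h : G) (H : W.Adj g h) : W.Adj h g := by
  obtain ⟨i, j, e, hij, rfl⟩ := H
  exact ⟨i, j, !e, hij, by rw [ch_not, mul_inv_cancel_right]⟩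

/-- The subgraph of `Adj` spanned by the vertices of level less than `N`. -/
def Below (φ : G →* MulAut (FreeGroup (Fin n))) (N : ℕ) (g h : G) : Prop :=
  W.Adj g h ∧ lev (φ g) < N ∧ lev (φ h) < N

theorem below_symm {φ : G →* MulAut (FreeGroup (Fin n))} {N : ℕ} {g h : G}
    (H : ReflTransGen (W.Below φ N) g h) : ReflTransGen (W.Below φ N) h g :=
  have : Std.Symm (W.Below φ N) := ⟨fun _ _ ⟨h1, h2, h3⟩ => ⟨W.adj_symm _ _ h1, h3, h2⟩⟩
  symm H

theorem below_single {φ : G →* MulAut (FreeGroup (Fin n))} {N : ℕ} {g : G} {i j : Fin n}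
    (hij : i ≠ j) {e : Bool} (h1 : lev (φ g) < N) (h2 : lev (φ (g * W.ch i j e)) < N) :
    ReflTransGen (W.Below φ N) g (g * W.ch i j e) :=
  ReflTransGen.single ⟨⟨i, j, e, hij, rfl⟩, h1, h2⟩

theorem ch_comm {i j k : Fin n} (hij : i ≠ j) (hik : i ≠ k) (hjk : j ≠ k) (d e : Bool) :
    Commute (W.ch i k d) (W.ch j k e) :=
  commute_sgn (W.chi_comm i.2 j.2 k.2 (Fin.val_ne_of_ne hij) (Fin.val_ne_of_ne hik)
    (Fin.val_ne_of_ne hjk)) d e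

theorem ch_triple {i j k : Fin n} (hij : i ≠ j) (hik : i ≠ k) (hjk : j ≠ k) (d e : Bool) :
    Commute (W.ch i k d * W.ch j k d) (W.ch i j e) := by
  have h := W.chi_comm i.2 j.2 k.2 (Fin.val_ne_of_ne hij) (Fin.val_ne_of_ne hik)
    (Fin.val_ne_of_ne hjk)
  rw [ch, ch, ← sgn_mul h]
  exact commute_sgn (W.chi_triple i.2 j.2 k.2 (Fin.val_ne_of_ne hij) (Fin.val_ne_of_ne hik)
    (Fin.val_ne_of_ne hjk)) d e

theorem ch_disjoint {i j k l : Fin n} (hij : i ≠ j) (hik : i ≠ k) (hjk : j ≠ k) (hil : i ≠ l)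
    (hjl : j ≠ l) (hkl : k ≠ l) (d e : Bool) : Commute (W.ch i j d) (W.ch k l e) :=
  commute_sgn (W.chi_disjoint i.2 j.2 k.2 l.2 (Fin.val_ne_of_ne hij) (Fin.val_ne_of_ne hik)
    (Fin.val_ne_of_ne hjk) (Fin.val_ne_of_ne hil) (Fin.val_ne_of_ne hjl)
    (Fin.val_ne_of_ne hkl)) d e

/-- Right multiplication by an elementary move acts on the images of the generators as a partial
conjugation: the `i`-th image is conjugated by the `j`-th one or its inverse. -/
def Acts (φ : G →* MulAut (FreeGroup (Fin n))) : Prop :=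
  ∀ (g : G) (i j : Fin n) (_ : i ≠ j) (e : Bool) (k : Fin n), φ (g * W.ch i j e) (of k) =
    if k = i then (sgn (φ g (of j)) e)⁻¹ * φ g (of i) * sgn (φ g (of j)) e else φ g (of k)

theorem acts {φ : G →* MulAut (FreeGroup (Fin n))}
    (hσ : ∀ i, i + 1 < n → IsSigma n i (φ (W.s i)))
    (hρ : ∀ i, i + 1 < n → IsRho n i (φ (W.r i))) : W.Acts φ := by
  intro g i j hij e k
  rw [map_mul]
  exact W.act_ch φ hσ hρ (φ g) hij e k

variable {W} {φ : G →* MulAut (FreeGroup (Fin n))} {g : G} {π : Fin n → Fin n}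
  {v : Fin n → List (Fin n × Bool)}

/-- A move along a cancelling prefix lowers the level. -/
theorem Acts.lev_lt_of_prefix (hφ : W.Acts φ) (hv : ∀ k, CanForm (φ g (of k)) (π k) (v k))
    {i j : Fin n} (hij : i ≠ j) {e : Bool} (hp : v j ++ [(π j, e)] <+: v i) :
    lev (φ (g * W.ch i j e)) < lev (φ g) := by
  have hlt := (hv i).norm_conj_lt (hv j) hp
  refine lev_lt (fun k => ?_) i ?_
  · rw [hφ g i j hij]
    split_ifs with h
    · rw [h]; exact hlt.le
    · exact le_rfl
  · rw [hφ g i j hij, if_pos rfl]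
    exact hlt

/-- A move that is not along a cancelling prefix raises the level. -/
theorem Acts.prefix_or_lev_lt (hφ : W.Acts φ) (hv : ∀ k, CanForm (φ g (of k)) (π k) (v k))
    (hπ : Function.Injective π) {i j : Fin n} (hij : i ≠ j) (e : Bool) :
    v j ++ [(π j, e)] <+: v i ∨ lev (φ g) < lev (φ (g * W.ch i j e)) := by
  rcases (hv i).prefix_or_lt e (hv j) (fun h => hij (hπ h).symm) with h | hlt
  · exact Or.inl h
  right
  refine lev_lt (fun k => ?_) i ?_
  · rw [hφ g i j hij]
    split_ifs with h
    · rw [h]; exact hlt.le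
    · exact le_rfl
  · rw [hφ g i j hij, if_pos rfl]
    exact hlt

/-- Commuting lowering moves that do not change each other's conjugating elements: the square they
span closes below the peak. -/
theorem Acts.square (hφ : W.Acts φ) (hv : ∀ k, CanForm (φ g (of k)) (π k) (v k))
    {i j k l : Fin n} (hij : i ≠ j) (hkl : k ≠ l) (hik : i ≠ k) (hil : i ≠ l) (hjk : j ≠ k)
    {e d : Bool} (h1 : v j ++ [(π j, e)] <+: v i) (h2 : v l ++ [(π l, d)] <+: v k)
    (hc : Commute (W.ch i j e) (W.ch k l d)) :
    ReflTransGen (W.Below φ (lev (φ g))) (g * W.ch i j e) (g * W.ch k l d) := by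
  have lA := hφ.lev_lt_of_prefix hv hij h1
  have lB := hφ.lev_lt_of_prefix hv hkl h2
  have nA := (hv i).norm_conj_lt (hv j) h1
  have nB := (hv k).norm_conj_lt (hv l) h2
  have lE : lev (φ (g * W.ch i j e * W.ch k l d)) < lev (φ g) := by
    have f : ∀ m, FreeGroup.norm (φ (g * W.ch i j e * W.ch k l d) (of m)) ≤
        FreeGroup.norm (φ g (of m)) ∧
        (m = i → FreeGroup.norm (φ (g * W.ch i j e * W.ch k l d) (of m)) <
        FreeGroup.norm (φ g (of m))) := by
      intro m
      rw [hφ _ k l hkl]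
      simp only [hφ g i j hij, if_neg hil.symm, if_neg hik.symm]
      by_cases hmk : m = k
      · subst hmk
        rw [if_pos rfl]
        exact ⟨nB.le, fun h => absurd h.symm hik⟩
      · rw [if_neg hmk]
        by_cases hmi : m = i
        · subst hmi
          rw [if_pos rfl]
          exact ⟨nA.le, fun _ => nA⟩
        · rw [if_neg hmi]
          exact ⟨le_rfl, fun h => absurd h hmi⟩
    exact lev_lt (fun m => (f m).1) i ((f i).2 rfl)
  refine (W.below_single hkl lA lE).trans (W.below_symm ?_)
  have e1 : g * W.ch i j e * W.ch k l d = g * W.ch k l d * W.ch i j e := by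
    rw [mul_assoc, hc.eq, mul_assoc]
  rw [e1] at lE ⊢
  exact W.below_single hij lB lE

/-- The three lowering moves coming from a nested pair of prefixes `v l < v j < v i` are joined
below the peak, by the pentagon that the relations `ch_comm` and `ch_triple` provide. -/
theorem Acts.nested (hφ : W.Acts φ) (hv : ∀ k, CanForm (φ g (of k)) (π k) (v k))
    {i j l : Fin n} (hij : i ≠ j) (hil : i ≠ l) (hjl : j ≠ l) {e d : Bool}
    (h1 : v j ++ [(π j, e)] <+: v i) (h2 : v l ++ [(π l, d)] <+: v j) :
    ∃ z, ReflTransGen (W.Below φ (lev (φ g))) (g * W.ch i j e) z ∧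
      ReflTransGen (W.Below φ (lev (φ g))) (g * W.ch j l d) z ∧
      ReflTransGen (W.Below φ (lev (φ g))) (g * W.ch i l d) z := by
  have h3 : v l ++ [(π l, d)] <+: v i := (h2.trans (List.prefix_append _ _)).trans h1
  have lA := hφ.lev_lt_of_prefix hv hij h1
  have lB := hφ.lev_lt_of_prefix hv hjl h2
  have lC := hφ.lev_lt_of_prefix hv hil h3
  have nA := (hv i).norm_conj_lt (hv j) h1
  have nB := (hv j).norm_conj_lt (hv l) h2
  have nC := (hv i).norm_conj_lt (hv l) h3
  obtain ⟨a, ha⟩ := h1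
  obtain ⟨b, hb⟩ := h2
  have c1 := hφ g i j hij e
  have c2 := hφ (g * W.ch i j e) j l hjl d
  have c3 := hφ (g * W.ch i j e * W.ch j l d) i l hil d
  have c4 := hφ g i l hil d
  have c5 := hφ (g * W.ch i l d) j l hjl d
  simp only [c1, if_neg hij.symm, if_neg hil.symm] at c2
  simp only [c2, if_neg hij, if_neg hil.symm, if_neg hjl.symm, if_pos] at c3
  simp only [c4, if_neg hij.symm, if_neg hil.symm] at c5
  -- the new conjugating word of `x_i` loses two letters
  have nE : FreeGroup.norm ((sgn (φ g (of l)) d)⁻¹ * ((sgn (φ g (of j)) e)⁻¹ * φ g (of i) *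
      sgn (φ g (of j)) e) * sgn (φ g (of l)) d) < FreeGroup.norm (φ g (of i)) := by
    have q1 := conj_eq (hv i).2.2 (hv j).2.2 (t := a) (e := e) (by simpa using ha.symm)
    have q2 := conj_eq q1 (hv l).2.2 (t := b ++ a) (e := d) (by simp [← hb])
    rw [q2, (hv i).norm_eq]
    have := norm_conj_le (v l ++ (b ++ a)) (π i)
    rw [← ha, ← hb]
    simp only [List.length_append, List.length_cons, List.length_nil] at *
    omega
  have lAB : lev (φ (g * W.ch i j e * W.ch j l d)) < lev (φ g) := by
    refine lev_lt (fun m => ?_) i ?_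
    · rw [c2]
      split_ifs with h h'
      · rw [h]; exact nB.le
      · rw [h']; exact nA.le
      · exact le_rfl
    · rw [c2, if_neg hij, if_pos rfl]
      exact nA
  have lCB : lev (φ (g * W.ch i l d * W.ch j l d)) < lev (φ g) := by
    refine lev_lt (fun m => ?_) i ?_
    · rw [c5]
      split_ifs with h h'
      · rw [h]; exact nB.le
      · rw [h']; exact nC.le
      · exact le_rfl
    · rw [c5, if_neg hij, if_pos rfl]
      exact nC
  have lE : lev (φ (g * W.ch i j e * W.ch j l d * W.ch i l d)) < lev (φ g) := by
    refine lev_lt (fun m => ?_) i ?_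
    · rw [c3]
      split_ifs with h h'
      · rw [h]; exact nE.le
      · rw [h']; exact nB.le
      · exact le_rfl
    · rw [c3, if_pos rfl]
      exact nE
  have q1 := (W.ch_comm hij hil hjl d d).eq
  have q2 := (W.ch_triple hij hil hjl d e).eq
  have e1 : g * W.ch i j e * W.ch j l d * W.ch i l d =
      g * W.ch i l d * W.ch j l d * W.ch i j e := by
    simp only [mul_assoc] at q2 ⊢
    rw [q2, q1]
  have e2 : g * W.ch i l d * W.ch j l d = g * W.ch j l d * W.ch i l d := by
    rw [mul_assoc, q1, mul_assoc]
  have pA := (W.below_single hjl lA lAB).trans (W.below_single hil lAB lE)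
  have pE : ReflTransGen (W.Below φ (lev (φ g))) (g * W.ch i l d * W.ch j l d)
      (g * W.ch i j e * W.ch j l d * W.ch i l d) := by
    rw [e1] at lE ⊢
    exact W.below_single hij lCB lE
  refine ⟨_, pA, ?_, (W.below_single hjl lC lCB).trans pE⟩
  refine ReflTransGen.trans ?_ pE
  rw [e2] at lCB ⊢
  exact W.below_single hil lB lCB

/-- Two lowering moves from `g` are joined below `g`. -/
theorem Acts.peak (hφ : W.Acts φ) (hv : ∀ k, CanForm (φ g (of k)) (π k) (v k))
    (hπ : Function.Injective π) {i j k l : Fin n} (hij : i ≠ j) (hkl : k ≠ l) {e d : Bool}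
    (h1 : v j ++ [(π j, e)] <+: v i) (h2 : v l ++ [(π l, d)] <+: v k) :
    ReflTransGen (W.Below φ (lev (φ g))) (g * W.ch i j e) (g * W.ch k l d) := by
  by_cases hik : i = k
  · subst hik
    by_cases hjl : j = l
    · subst hjl
      have : (π j, e) = (π j, d) := by
        have := List.prefix_of_prefix_length_le h1 h2 (by simp)
        have := this.eq_of_length (by simp)
        simpa using this
      rw [(Prod.mk.inj this).2]
    · have hne : ((π j, e) : Fin n × Bool) ≠ (π l, d) := fun h => hjl (hπ (Prod.mk.inj h).1)
      rcases prefix_nested hne h1 h2 with H | H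
      · obtain ⟨z, a, -, b⟩ := hφ.nested hv hkl hij (Ne.symm hjl) h2 H
        exact b.trans (W.below_symm a)
      · obtain ⟨z, a, -, b⟩ := hφ.nested hv hij hkl hjl h1 H
        exact a.trans (W.below_symm b)
  · by_cases hil : i = l
    · subst hil
      by_cases hjk : j = k
      · subst hjk
        have q1 := h1.length_le
        have q2 := h2.length_le
        simp only [List.length_append, List.length_cons] at q1 q2
        omega
      · obtain ⟨z, a, b, -⟩ := hφ.nested hv hkl (Ne.symm hjk) hij h2 h1
        exact b.trans (W.below_symm a)
    · by_cases hjk : j = k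
      · subst hjk
        obtain ⟨z, a, b, -⟩ := hφ.nested hv hij hil hkl h1 h2
        exact a.trans (W.below_symm b)
      · refine hφ.square hv hij hkl hik hil hjk h1 h2 ?_
        by_cases hjl : j = l
        · subst hjl
          exact W.ch_comm hik hij hkl e d
        · exact W.ch_disjoint hij hik hjk hil hjl hkl e d

/-- Faithfulness. An element of the kernel is `q * r` with `r ∈ H 0` and `q` a product of elementary
moves; then `1` and `q` both have the least possible level `n`, and are connected in `Adj`, hence
equal. -/
theorem Acts.injective (hφ : W.Acts φ) (hPC : ∀ g, φ g ∈ PCSet n)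
    (hρ : ∀ i, i + 1 < n → IsRho n i (φ (W.r i)))
    (hgen : Subgroup.closure {g | ∃ i, i + 1 < n ∧ (g = W.s i ∨ g = W.r i)} = ⊤) :
    Function.Injective φ := by
  rw [injective_iff_map_eq_one]
  intro g hg
  obtain ⟨q, hq, r, hr, rfl⟩ := W.exists_decomp hgen g
  -- `q` is joined to `1` by elementary moves
  have hcon : ReflTransGen W.Adj 1 q := by
    clear hg
    induction hq using Subgroup.closure_induction_right with
    | one => exact .refl
    | mul_right x _ y hy ih =>
      obtain ⟨i, j, hij, rfl⟩ := hy
      exact ih.tail ⟨i, j, true, hij, rfl⟩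
    | mul_inv_cancel x _ y hy ih =>
      obtain ⟨i, j, hij, rfl⟩ := hy
      exact ih.tail ⟨i, j, false, hij, rfl⟩
  have lmin : ∀ h ∈ W.H 0, lev (φ h) = n := by
    intro h hh
    have : ∀ k : Fin n, FreeGroup.norm (φ h (of k)) = 1 := by
      intro k
      have := W.act_H φ hρ hh k k.2
      rw [xg_fin, xg_lt (W.p_lt hh k.2)] at this
      rw [this, FreeGroup.norm_of]
    simp [lev, this]
  have e : φ q = φ r⁻¹ := by
    rw [map_inv, eq_inv_iff_mul_eq_one, ← map_mul, hg]
  have q1 : (1 : G) = q := by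
    refine eq_of_connected W.Adj W.adj_symm (fun g => lev (φ g)) ?_ ?_ hcon ?_ ?_
    · rintro x _ ⟨i, j, e, hij, rfl⟩
      obtain ⟨π, v, hv⟩ := PC_canForm (hPC x)
      rcases hφ.prefix_or_lev_lt hv π.injective hij e with h | h
      · exact (hφ.lev_lt_of_prefix hv hij h).ne'
      · exact h.ne
    · rintro x _ _ ⟨i, j, e, hij, rfl⟩ ⟨k, l, d, hkl, rfl⟩ hb hc
      obtain ⟨π, v, hv⟩ := PC_canForm (hPC x)
      exact hφ.peak hv π.injective hij hkl
        ((hφ.prefix_or_lev_lt hv π.injective hij e).resolve_right hb.not_gt)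
        ((hφ.prefix_or_lev_lt hv π.injective hkl d).resolve_right hc.not_gt)
    · intro z _
      rw [lmin 1 (one_mem _)]
      exact le_lev _
    · intro z _
      simp only [e]
      rw [lmin _ (inv_mem hr)]
      exact le_lev _
  subst q1
  rw [one_mul] at hg ⊢
  refine W.eq_one_of_p hr fun k hk => ?_
  have := W.act_H φ hρ hr k hk
  rw [hg, xg_lt hk, xg_lt (W.p_lt hr hk), MulAut.one_apply] at this
  exact (Fin.mk.inj (FreeGroup.of_injective this)).symm

end Welded

end

/-! ### The relations for permutations and automorphisms, and the presented group -/

section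

open FreeGroup hiding map_mul map_one map_inv

/-- An assignment that satisfies the welded braid relations kills the relators. -/
theorem lift_weldedRels {n : ℕ} {M : Type*} [Group M] (s r : ℕ → M)
    (ss : ∀ i j, i + 1 < j → j + 1 < n → s i * s j = s j * s i)
    (rr : ∀ i j, i + 1 < j → j + 1 < n → r i * r j = r j * r i)
    (rs : ∀ i j, i + 1 < j → j + 1 < n → r i * s j = s j * r i)
    (sr : ∀ i j, i + 1 < j → j + 1 < n → r j * s i = s i * r j)
    (sss : ∀ i, i + 2 < n → s i * s (i + 1) * s i = s (i + 1) * s i * s (i + 1))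
    (rrr : ∀ i, i + 2 < n → r i * r (i + 1) * r i = r (i + 1) * r i * r (i + 1))
    (r2 : ∀ i, i + 1 < n → r i * r i = 1)
    (rrs : ∀ i, i + 2 < n → r (i + 1) * r i * s (i + 1) = s i * r (i + 1) * r i)
    (ssr : ∀ i, i + 2 < n → s (i + 1) * s i * r (i + 1) = r i * s (i + 1) * s i) :
    ∀ z ∈ weldedRels n, FreeGroup.lift
      (Sum.elim (fun i : Fin (n - 1) => s i) (fun i : Fin (n - 1) => r i)) z = 1 := by
  intro z hz
  rcases hz with ⟨⟨i, hi⟩, ⟨j, hj⟩, h, rfl⟩ | ⟨⟨i, hi⟩, ⟨j, hj⟩, h, rfl⟩ |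
    ⟨⟨i, hi⟩, ⟨j, hj⟩, h, rfl⟩ | ⟨⟨i, hi⟩, ⟨j, hj⟩, h, rfl⟩ | ⟨⟨i, hi⟩, rfl⟩ |
    ⟨⟨i, hi⟩, ⟨j, hj⟩, h, rfl⟩ |
    ⟨⟨i, hi⟩, ⟨j, hj⟩, h, rfl⟩ | ⟨⟨i, hi⟩, ⟨j, hj⟩, h, rfl⟩ <;>
    simp only [wS, wR, map_mul, map_inv, lift_apply_of, Sum.elim_inl, Sum.elim_inr,
      mul_inv_eq_one]
  · rcases h with h | h
    · exact ss i j h (by omega)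
    · exact (ss j i h (by omega)).symm
  · obtain rfl : j = i + 1 := h
    exact sss i (by omega)
  · rcases h with h | h
    · exact rr i j h (by omega)
    · exact (rr j i h (by omega)).symm
  · obtain rfl : j = i + 1 := h
    exact rrr i (by omega)
  · exact r2 i (by omega)
  · rcases h with h | h
    · exact rs i j h (by omega)
    · exact sr j i h (by omega)
  · obtain rfl : j = i + 1 := h
    exact rrs i (by omega)
  · obtain rfl : j = i + 1 := h
    exact ssr i (by omega)

theorem mulAut_ext {n : ℕ} {α β : MulAut (FreeGroup (Fin n))}
    (h : ∀ k, k < n → α (xg n k) = β (xg n k)) : α = β := by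
  refine MulEquiv.toMonoidHom_injective (FreeGroup.ext_hom _ _ fun k => ?_)
  have := h k k.2
  rwa [xg_fin] at this

/-- Two automorphisms commute when each moves only one pair of adjacent generators, the two pairs
are disjoint, and each automorphism fixes the images of the pair moved by the other. -/
theorem far_comm {n i j : ℕ} (hij : i + 1 < j) {α β : MulAut (FreeGroup (Fin n))}
    (hα : ∀ k, k < n → k ≠ i → k ≠ i + 1 → α (xg n k) = xg n k)
    (hβ : ∀ k, k < n → k ≠ j → k ≠ j + 1 → β (xg n k) = xg n k)
    (hα' : β (α (xg n i)) = α (xg n i) ∧ β (α (xg n (i + 1))) = α (xg n (i + 1)))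
    (hβ' : α (β (xg n j)) = β (xg n j) ∧ α (β (xg n (j + 1))) = β (xg n (j + 1))) :
    α * β = β * α := by
  refine mulAut_ext fun k hk => ?_
  rw [MulAut.mul_apply, MulAut.mul_apply]
  by_cases h1 : k = i
  · rw [h1, hα'.1, hβ i (by omega) (by omega) (by omega)]
  by_cases h2 : k = i + 1
  · rw [h2, hα'.2, hβ (i + 1) (by omega) (by omega) (by omega)]
  rw [hα k hk h1 h2]
  by_cases h3 : k = j
  · rw [h3, hβ'.1]
  by_cases h4 : k = j + 1
  · rw [h4, hβ'.2]
  rw [hβ k hk h3 h4, hα k hk h1 h2]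

theorem aut_far {n : ℕ} {σ ρ : ℕ → MulAut (FreeGroup (Fin n))}
    (hσ : ∀ i, i + 1 < n → IsSigma n i (σ i)) (hρ : ∀ i, i + 1 < n → IsRho n i (ρ i))
    {i j : ℕ} (hij : i + 1 < j) (hj : j + 1 < n) :
    σ i * σ j = σ j * σ i ∧ ρ i * ρ j = ρ j * ρ i ∧ ρ i * σ j = σ j * ρ i ∧
      ρ j * σ i = σ i * ρ j := by
  obtain ⟨a1, a2, a3⟩ := hσ i (by omega)
  obtain ⟨b1, b2, b3⟩ := hρ i (by omega)
  obtain ⟨c1, c2, c3⟩ := hσ j (by omega)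
  obtain ⟨d1, d2, d3⟩ := hρ j (by omega)
  have a4 := a3 j (by omega) (by omega) (by omega)
  have a5 := a3 (j + 1) (by omega) (by omega) (by omega)
  have b4 := b3 j (by omega) (by omega) (by omega)
  have b5 := b3 (j + 1) (by omega) (by omega) (by omega)
  have c4 := c3 i (by omega) (by omega) (by omega)
  have c5 := c3 (i + 1) (by omega) (by omega) (by omega)
  have d4 := d3 i (by omega) (by omega) (by omega)
  have d5 := d3 (i + 1) (by omega) (by omega) (by omega)
  refine ⟨far_comm hij a3 c3 ?_ ?_, far_comm hij b3 d3 ?_ ?_, far_comm hij b3 c3 ?_ ?_,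
    (far_comm hij a3 d3 ?_ ?_).symm⟩ <;> simp only [a1, a2, b1, b2, c1, c2, d1, d2, a4, a5, b4,
      b5, c4, c5, d4, d5, map_mul, map_inv, and_self]

theorem aut_adj {n : ℕ} {σ ρ : ℕ → MulAut (FreeGroup (Fin n))}
    (hσ : ∀ i, i + 1 < n → IsSigma n i (σ i)) (hρ : ∀ i, i + 1 < n → IsRho n i (ρ i))
    {i : ℕ} (hi : i + 2 < n) :
    σ i * σ (i + 1) * σ i = σ (i + 1) * σ i * σ (i + 1) ∧
    ρ i * ρ (i + 1) * ρ i = ρ (i + 1) * ρ i * ρ (i + 1) ∧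
    ρ (i + 1) * ρ i * σ (i + 1) = σ i * ρ (i + 1) * ρ i ∧
    σ (i + 1) * σ i * ρ (i + 1) = ρ i * σ (i + 1) * σ i := by
  obtain ⟨a1, a2, a3⟩ := hσ i (by omega)
  obtain ⟨b1, b2, b3⟩ := hρ i (by omega)
  obtain ⟨c1, c2, c3⟩ := hσ (i + 1) (by omega)
  obtain ⟨d1, d2, d3⟩ := hρ (i + 1) (by omega)
  have a4 := a3 (i + 1 + 1) (by omega) (by omega) (by omega)
  have b4 := b3 (i + 1 + 1) (by omega) (by omega) (by omega)
  have c4 := c3 i (by omega) (by omega) (by omega)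
  have d4 := d3 i (by omega) (by omega) (by omega)
  refine ⟨mulAut_ext fun k hk => ?_, mulAut_ext fun k hk => ?_, mulAut_ext fun k hk => ?_,
    mulAut_ext fun k hk => ?_⟩ <;>
  · simp only [MulAut.mul_apply]
    by_cases h1 : k = i
    · subst h1
      simp only [a1, a2, b1, b2, c1, c2, d1, d2, a4, b4, c4, d4, map_mul, map_inv]
    by_cases h2 : k = i + 1
    · subst h2
      simp only [a1, a2, b1, b2, c1, c2, d1, d2, a4, b4, c4, d4, map_mul, map_inv]
    by_cases h3 : k = i + 1 + 1
    · subst h3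
      simp only [a1, a2, b1, b2, c1, c2, d1, d2, a4, b4, c4, d4, map_mul, map_inv] <;> group
    simp only [a3 k hk h1 h2, b3 k hk h1 h2, c3 k hk h2 h3, d3 k hk h2 h3]

theorem aut_sq {n : ℕ} {ρ : ℕ → MulAut (FreeGroup (Fin n))}
    (hρ : ∀ i, i + 1 < n → IsRho n i (ρ i))
    {i : ℕ} (hi : i + 1 < n) :
    ρ i * ρ i = 1 := by
  obtain ⟨b1, b2, b3⟩ := hρ i hi
  refine mulAut_ext fun k hk => ?_
  rw [MulAut.mul_apply, MulAut.one_apply]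
  by_cases h1 : k = i
  · rw [h1, b1, b2]
  by_cases h2 : k = i + 1
  · rw [h2, b2, b1]
  rw [b3 k hk h1 h2, b3 k hk h1 h2]

theorem swap_far {i j : ℕ} (hij : i + 1 < j) :
    Equiv.swap i (i + 1) * Equiv.swap j (j + 1) = Equiv.swap j (j + 1) * Equiv.swap i (i + 1) := by
  ext k
  simp only [Equiv.Perm.mul_apply, Equiv.swap_apply_def]
  split_ifs <;> omega

theorem swap_adj (i : ℕ) :
    Equiv.swap i (i + 1) * Equiv.swap (i + 1) (i + 1 + 1) * Equiv.swap i (i + 1) =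
      Equiv.swap (i + 1) (i + 1 + 1) * Equiv.swap i (i + 1) * Equiv.swap (i + 1) (i + 1 + 1) := by
  ext k
  simp only [Equiv.Perm.mul_apply, Equiv.swap_apply_def]
  split_ifs <;> omega

/-- The presented group as a group with elements satisfying the welded braid relations; `s i` and
`r i` are set to `1` out of range. -/
noncomputable def presented (n : ℕ) : Welded n (PresentedGroup (weldedRels n)) where
  s i := if h : i < n - 1 then PresentedGroup.of (Sum.inl ⟨i, h⟩) else 1
  r i := if h : i < n - 1 then PresentedGroup.of (Sum.inr ⟨i, h⟩) else 1
  p := PresentedGroup.toGroup (f := Sum.elim (fun i : Fin (n - 1) => Equiv.swap (i : ℕ) (i + 1))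
      (fun i : Fin (n - 1) => Equiv.swap (i : ℕ) (i + 1)))
    (lift_weldedRels (fun i => Equiv.swap i (i + 1)) (fun i => Equiv.swap i (i + 1))
      (fun _ _ h _ => swap_far h) (fun _ _ h _ => swap_far h) (fun _ _ h _ => swap_far h)
      (fun _ _ h _ => (swap_far h).symm) (fun i _ => swap_adj i) (fun i _ => swap_adj i)
      (fun i _ => Equiv.swap_mul_self _ _) (fun i _ => (swap_adj i).symm)
      (fun i _ => (swap_adj i).symm))
  ps i hi := by rw [dif_pos (by omega)]; simp
  pr i hi := by rw [dif_pos (by omega)]; simp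
  ss i j h hj := by
    rw [dif_pos (by omega), dif_pos (by omega)]
    exact PresentedGroup.mk_eq_mk_of_mul_inv_mem (Or.inl ⟨_, _, Or.inl h, rfl⟩)
  rr i j h hj := by
    rw [dif_pos (by omega), dif_pos (by omega)]
    exact PresentedGroup.mk_eq_mk_of_mul_inv_mem (Or.inr (Or.inr (Or.inl ⟨_, _, Or.inl h, rfl⟩)))
  rs i j h hj := by
    rw [dif_pos (by omega), dif_pos (by omega)]
    exact PresentedGroup.mk_eq_mk_of_mul_inv_mem
      (Or.inr (Or.inr (Or.inr (Or.inr (Or.inr (Or.inl ⟨_, _, Or.inl h, rfl⟩))))))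
  sr i j h hj := by
    rw [dif_pos (by omega), dif_pos (by omega)]
    exact PresentedGroup.mk_eq_mk_of_mul_inv_mem
      (Or.inr (Or.inr (Or.inr (Or.inr (Or.inr (Or.inl ⟨_, _, Or.inr h, rfl⟩))))))
  sss i hi := by
    rw [dif_pos (by omega), dif_pos (by omega)]
    exact PresentedGroup.mk_eq_mk_of_mul_inv_mem (Or.inr (Or.inl ⟨_, _, rfl, rfl⟩))
  rrr i hi := by
    rw [dif_pos (by omega), dif_pos (by omega)]
    exact PresentedGroup.mk_eq_mk_of_mul_inv_mem
      (Or.inr (Or.inr (Or.inr (Or.inl ⟨_, _, rfl, rfl⟩))))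
  r2 i hi := by
    rw [dif_pos (by omega)]
    exact PresentedGroup.one_of_mem (Or.inr (Or.inr (Or.inr (Or.inr (Or.inl ⟨_, rfl⟩)))))
  rrs i hi := by
    rw [dif_pos (by omega), dif_pos (by omega), dif_pos (by omega), dif_pos (by omega)]
    exact PresentedGroup.mk_eq_mk_of_mul_inv_mem
      (Or.inr (Or.inr (Or.inr (Or.inr (Or.inr (Or.inr (Or.inl ⟨_, _, rfl, rfl⟩)))))))
  ssr i hi := by
    rw [dif_pos (by omega), dif_pos (by omega), dif_pos (by omega), dif_pos (by omega)]
    exact PresentedGroup.mk_eq_mk_of_mul_inv_mem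
      (Or.inr (Or.inr (Or.inr (Or.inr (Or.inr (Or.inr (Or.inr ⟨_, _, rfl, rfl⟩)))))))

theorem presented_s {n : ℕ} (i : Fin (n - 1)) : (presented n).s i = PresentedGroup.of (Sum.inl i) :=
  dif_pos i.2

theorem presented_r {n : ℕ} (i : Fin (n - 1)) : (presented n).r i = PresentedGroup.of (Sum.inr i) :=
  dif_pos i.2

theorem presented_generated (n : ℕ) :
    Subgroup.closure {g | ∃ i, i + 1 < n ∧ (g = (presented n).s i ∨ g = (presented n).r i)} = ⊤ := by
  rw [eq_top_iff, ← PresentedGroup.closure_range_of]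
  refine Subgroup.closure_mono ?_
  rintro _ ⟨i | i, rfl⟩
  · exact ⟨i, by omega, Or.inl (presented_s i).symm⟩
  · exact ⟨i, by omega, Or.inr (presented_r i).symm⟩


end

/-- For `n ≥ 1`, there is a group isomorphism from the presented group
`G_n = ⟨s_1, …, s_{n-1}, r_1, …, r_{n-1} ∣ welded relations⟩` onto the subgroup `PC_n` of
`Aut(F_n)` of permutation-conjugacy automorphisms, sending `s_i ↦ σ_i` and `r_i ↦ ρ_i`
(stated as: an injective homomorphism to `Aut(F_n)` whose range is `PC_n`). -/
theorem presentedGroup_iso_pc (n : ℕ) (hn : 1 ≤ n)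
    (σ ρ : ℕ → MulAut (FreeGroup (Fin n)))
    (hσ : ∀ i, i + 1 < n → IsSigma n i (σ i))
    (hρ : ∀ i, i + 1 < n → IsRho n i (ρ i)) :
    ∃ φ : PresentedGroup (weldedRels n) →* MulAut (FreeGroup (Fin n)),
      Function.Injective φ ∧
      Set.range ⇑φ = PCSet n ∧
      (∀ i : Fin (n - 1), φ (PresentedGroup.of (Sum.inl i)) = σ (i : ℕ)) ∧
      (∀ i : Fin (n - 1), φ (PresentedGroup.of (Sum.inr i)) = ρ (i : ℕ)) := by
  set φ : PresentedGroup (weldedRels n) →* MulAut (FreeGroup (Fin n)) :=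
    PresentedGroup.toGroup (lift_weldedRels σ ρ
      (fun _ _ h h' => (aut_far hσ hρ h h').1) (fun _ _ h h' => (aut_far hσ hρ h h').2.1)
      (fun _ _ h h' => (aut_far hσ hρ h h').2.2.1) (fun _ _ h h' => (aut_far hσ hρ h h').2.2.2)
      (fun _ h => (aut_adj hσ hρ h).1) (fun _ h => (aut_adj hσ hρ h).2.1) (fun _ h => aut_sq hρ h)
      (fun _ h => (aut_adj hσ hρ h).2.2.1) (fun _ h => (aut_adj hσ hρ h).2.2.2)) with hφ
  have hs : ∀ i : Fin (n - 1), φ (PresentedGroup.of (Sum.inl i)) = σ (i : ℕ) := fun i => by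
    simp [hφ]
  have hr : ∀ i : Fin (n - 1), φ (PresentedGroup.of (Sum.inr i)) = ρ (i : ℕ) := fun i => by
    simp [hφ]
  have hσ' : ∀ i, i + 1 < n → IsSigma n i (φ ((presented n).s i)) := fun i hi => by
    rw [presented_s ⟨i, by omega⟩, hs]
    exact hσ i hi
  have hρ' : ∀ i, i + 1 < n → IsRho n i (φ ((presented n).r i)) := fun i hi => by
    rw [presented_r ⟨i, by omega⟩, hr]
    exact hρ i hi
  have hPC := (presented n).map_mem_PC φ hσ' hρ' (presented_generated n)
  refine ⟨φ, ((presented n).acts hσ' hρ').injective hPC hρ' (presented_generated n), ?_, hs, hr⟩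
  refine Set.Subset.antisymm ?_ fun α hα => (presented n).PC_subset_range φ hσ' hρ' hPC _ α hα rfl
  rintro _ ⟨g, rfl⟩
  exact hPC g

end LoopBraidGroups
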